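/- Let r ≥ 2 and d ≥ 1 be integers and set d_1 = ⋯ = d_r = d. Let Z ⊆ W_{r,d}×⋯×W_{r,d} (r factors) be the set of tuples (F_1,…,F_r) with dim V(F_1,…,F_r) ≥ 1, and let L be the set of tuples (F_1,…,F_r) such that V(F_1,…,F_r) contains a line of ℙ^r. Then Z has a unique irreducible component of maximal dimension, and this component equals L. -/

import Mathlib

open MvPolynomial

noncomputable section

variable (K : Type*) [Field K] (M : Type*) [AddCommGroup M] [Module K M]

/-- Evaluation of a polynomial in the linear functionals of `M` at a point `v : M`.
These are precisely the polynomial functions on the affine space `M`. -/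
def polyEval (p : MvPolynomial (M →ₗ[K] K) K) (v : M) : K :=
  MvPolynomial.eval (fun φ : M →ₗ[K] K => φ v) p

lemma polyEval_mul (p q : MvPolynomial (M →ₗ[K] K) K) (v : M) :
    polyEval K M (p * q) v = polyEval K M p v * polyEval K M q v :=
  map_mul (MvPolynomial.eval fun φ : M →ₗ[K] K => φ v) p q

/-- The collection of Zariski-closed subsets of the affine space `M`:
common zero loci of families of polynomial functions. -/
def zariskiCloseds : Set (Set M) :=
  {s | ∃ S : Set (MvPolynomial (M →ₗ[K] K) K), s = {v | ∀ p ∈ S, polyEval K M p v = 0}}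

/-- The Zariski topology on an affine space (vector space) `M` over `K`. -/
def zariskiTopology : TopologicalSpace M := by
  refine TopologicalSpace.ofClosed (zariskiCloseds K M) ⟨{1}, ?_⟩ ?_ ?_
  · ext v
    simp [polyEval]
  · intro A hA
    choose S hS using fun a : A => hA a.2
    refine ⟨⋃ a : A, S a, ?_⟩
    ext v
    simp only [Set.mem_sInter, Set.mem_setOf_eq, Set.mem_iUnion]
    constructor
    · rintro h p ⟨a, hp⟩
      have := h a a.2
      rw [hS a] at this
      exact this p hp
    · intro h t ht
      have : v ∈ {w | ∀ p ∈ S ⟨t, ht⟩, polyEval K M p w = 0} :=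
        fun p hp => h p ⟨⟨t, ht⟩, hp⟩
      rw [← hS ⟨t, ht⟩] at this
      exact this
  · rintro s ⟨S₁, rfl⟩ t ⟨S₂, rfl⟩
    refine ⟨Set.image2 (· * ·) S₁ S₂, ?_⟩
    ext v
    simp only [Set.mem_union, Set.mem_setOf_eq]
    constructor
    · rintro (h | h) p ⟨p₁, h₁, p₂, h₂, rfl⟩
      · show polyEval K M (p₁ * p₂) v = 0
        rw [polyEval_mul, h p₁ h₁, zero_mul]
      · show polyEval K M (p₁ * p₂) v = 0
        rw [polyEval_mul, h p₂ h₂, mul_zero]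
    · intro h
      by_contra hc
      push_neg at hc
      obtain ⟨⟨p₁, h₁, hv₁⟩, ⟨p₂, h₂, hv₂⟩⟩ := hc
      have h12 := h (p₁ * p₂) ⟨p₁, h₁, p₂, h₂, rfl⟩
      rw [polyEval_mul] at h12
      exact mul_ne_zero hv₁ hv₂ h12

/-- The dimension of a subset of affine space: the Krull dimension of its Zariski closure. -/
def dimSet {M : Type*} [TopologicalSpace M] (s : Set M) : WithBot ℕ∞ :=
  topologicalKrullDim ↥(closure s)

/-- `vdimGE r n F m` says that the common projective vanishing locus
`V(F 0, …, F (n-1)) ⊆ ℙ^r` has dimension at least `m` (with `dim ∅ = -∞`).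
This is encoded via the Krull dimension of the homogeneous coordinate ring of the
affine cone: `dim V(F) ≥ m` iff the cone has Krull dimension at least `max m 0 + 1`. -/
def vdimGE {K : Type*} [Field K] (r n : ℕ) (F : Fin n → MvPolynomial (Fin (r + 1)) K)
    (m : ℤ) : Prop :=
  ((m.toNat + 1 : ℕ) : WithBot ℕ∞) ≤
    ringKrullDim (MvPolynomial (Fin (r + 1)) K ⧸ Ideal.span (Set.range F))

end

section CommAlg

/-- Noether normalization, with dimension. -/
theorem aux_noether (K : Type*) [Field K] (A : Type*) [CommRing A] [IsDomain A] [Algebra K A]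
    [Algebra.FiniteType K A] :
    ∃ s : ℕ, ∃ y : Fin s → A, AlgebraicIndependent K y ∧ IsTranscendenceBasis K y ∧
      ringKrullDim A = s := by
  obtain ⟨s, g, hinj, hint⟩ := exists_integral_inj_algHom_of_fg K A
  have hai : AlgebraicIndependent K (fun i => g (MvPolynomial.X i)) := by
    have := (MvPolynomial.algebraicIndependent_X (Fin s) K).map' hinj
    exact this
  refine ⟨s, fun i => g (MvPolynomial.X i), hai, ?_, ?_⟩
  · rw [isTranscendenceBasis_iff_algebraicIndependent_isAlgebraic]
    refine ⟨hai, ?_⟩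
    constructor
    intro a
    have h1 : g.toRingHom.IsIntegralElem a := hint a
    have hr : ∀ p, g p ∈ Algebra.adjoin K (Set.range fun i => g (MvPolynomial.X i)) := by
      intro p
      have : g = MvPolynomial.aeval (fun i => g (MvPolynomial.X i)) := by
        ext i; simp
      rw [this]
      rw [Algebra.adjoin_range_eq_range_aeval]
      simp
    apply IsIntegral.isAlgebraic
    obtain ⟨p, hp, hp2⟩ := h1
    let g' : MvPolynomial (Fin s) K →+* Algebra.adjoin K (Set.range fun i => g (MvPolynomial.X i)) :=
      (g.codRestrict _ hr).toRingHom
    refine ⟨p.map g', hp.map _, ?_⟩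
    rw [Polynomial.eval₂_map]
    exact hp2
  · have hd : ringKrullDim (MvPolynomial (Fin s) K) = s := by
      simp [MvPolynomial.ringKrullDim_of_isNoetherianRing]
    rw [← hd]
    algebraize [g.toRingHom]
    have hI : Algebra.IsIntegral (MvPolynomial (Fin s) K) A := ⟨hint⟩
    apply le_antisymm
    · refine Order.krullDim_le_of_strictMono
        (PrimeSpectrum.comap (algebraMap (MvPolynomial (Fin s) K) A)) ?_
      intro p q hpq
      exact Ideal.IsIntegral.comap_lt_comap (I := p.asIdeal) (J := q.asIdeal) hpq
    · apply iSup_le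
      intro l
      obtain ⟨Q, -, hQ1, hQ2⟩ := Ideal.exists_ideal_over_prime_of_isIntegral (S := A)
        l.head.asIdeal ⊥ (by
          have : Ideal.comap (algebraMap (MvPolynomial (Fin s) K) A) ⊥ = ⊥ := by
            rw [← RingHom.ker_eq_comap_bot]
            exact (RingHom.injective_iff_ker_eq_bot _).1 hinj
          rw [this]; exact bot_le)
      have : Q.LiesOver l.head.asIdeal := ⟨hQ2.symm⟩
      obtain ⟨M, hM, -⟩ := Ideal.exists_ltSeries_of_hasGoingUp l Q
      rw [← hM]
      exact le_iSup (fun p : LTSeries (PrimeSpectrum A) => ((p.length : ℕ∞) : WithBot ℕ∞)) M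

theorem aux_card_le (K : Type*) [Field K] (A : Type*) [CommRing A] [IsDomain A] [Algebra K A]
    {s : ℕ} {y : Fin s → A} (hy : IsTranscendenceBasis K y) {T : Type*} [Fintype T] {z : T → A}
    (hz : AlgebraicIndependent K z) : Fintype.card T ≤ s := by
  have h1 := hz.lift_cardinalMk_le_trdeg
  have h2 := hy.lift_cardinalMk_eq_trdeg
  simp at h1 h2
  rw [← h2] at h1
  simpa using h1

theorem aux_card_le' (K : Type*) [Field K] {U T : Type*} [Fintype U] [Fintype T]
    {z : T → MvPolynomial U K}
    (hz : AlgebraicIndependent K z) : Fintype.card T ≤ Fintype.card U := by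
  have h1 := hz.lift_cardinalMk_le_trdeg
  simp at h1
  simpa using h1

/-- a domain of dimension at least two generated by a family has two algebraically independent
elements in this family. -/
theorem aux_two (K : Type*) [Field K] (A : Type*) [CommRing A] [IsDomain A] [Algebra K A]
    {σ : Type*} [Finite σ] (x : σ → A) (hx : Algebra.adjoin K (Set.range x) = ⊤)
    (hA : 2 ≤ ringKrullDim A) :
    ∃ i j : σ, AlgebraicIndependent K ![x i, x j] := by
  have : Algebra.FiniteType K A := by
    refine ⟨?_⟩
    rw [← hx]
    exact ⟨(Set.toFinite (Set.range x)).toFinset, by simp⟩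
  obtain ⟨s, y, -, hy, hd⟩ := aux_noether K A
  have hs : 2 ≤ s := by
    rw [hd] at hA; exact_mod_cast hA
  have : Algebra.IsAlgebraic (Algebra.adjoin K (Set.range x)) A := by
    rw [hx]
    constructor
    intro a
    exact isAlgebraic_algebraMap (⟨a, trivial⟩ : (⊤ : Subalgebra K A))
  obtain ⟨t, hts, ht⟩ := exists_isTranscendenceBasis_subset (R := K) (Set.range x)
  have hc := hy.lift_cardinalMk_eq ht
  have : 2 ≤ Cardinal.mk t := by
    have h3 : (Cardinal.lift.{0} (Cardinal.mk t)) = s := by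
      rw [← hc]; simp
    rw [Cardinal.lift_uzero] at h3
    rw [h3]; exact_mod_cast hs
  rw [Cardinal.two_le_iff] at this
  obtain ⟨a, b, hab⟩ := this
  obtain ⟨i, hi⟩ := hts a.2
  obtain ⟨j, hj⟩ := hts b.2
  refine ⟨i, j, ?_⟩
  have h := ht.1.comp ![a, b] (by
    intro u v
    fin_cases u <;> fin_cases v <;> simp [hab, hab.symm])
  convert h using 1
  funext u
  fin_cases u <;> simp [hi, hj]

end CommAlg

noncomputable section PolyFun

/-- Polynomial functions on a module. -/
def PF (K : Type*) [Field K] (M : Type*) [AddCommGroup M] [Module K M] : Subalgebra K (M → K) :=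
  Algebra.adjoin K (Set.range (fun φ : M →ₗ[K] K => (φ : M → K)))

variable {K : Type*} [Field K] {M : Type*} [AddCommGroup M] [Module K M]
  {M' : Type*} [AddCommGroup M'] [Module K M']

theorem PF_linear (φ : M →ₗ[K] K) : (fun v => φ v) ∈ PF K M :=
  Algebra.subset_adjoin ⟨φ, rfl⟩

theorem PF_coord {U : Type*} (u : U) : (fun v : U → K => v u) ∈ PF K (U → K) :=
  PF_linear (M := U → K) (LinearMap.proj (R := K) (φ := fun _ : U => K) u)

theorem PF_add {f g : M → K} (hf : f ∈ PF K M) (hg : g ∈ PF K M) :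
    (fun v => f v + g v) ∈ PF K M := add_mem hf hg

theorem PF_sub {f g : M → K} (hf : f ∈ PF K M) (hg : g ∈ PF K M) :
    (fun v => f v - g v) ∈ PF K M := sub_mem hf hg

theorem PF_neg {f : M → K} (hf : f ∈ PF K M) :
    (fun v => - f v) ∈ PF K M := neg_mem hf

theorem PF_mul {f g : M → K} (hf : f ∈ PF K M) (hg : g ∈ PF K M) :
    (fun v => f v * g v) ∈ PF K M := mul_mem hf hg

theorem PF_pow {f : M → K} (hf : f ∈ PF K M) (n : ℕ) :
    (fun v => f v ^ n) ∈ PF K M := pow_mem hf n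

theorem PF_const (a : K) : (fun _ : M => a) ∈ PF K M :=
  (PF K M).algebraMap_mem a

theorem PF_sum {ι : Type*} (s : Finset ι) {f : ι → M → K} (hf : ∀ i ∈ s, f i ∈ PF K M) :
    (fun v => ∑ i ∈ s, f i v) ∈ PF K M := by
  have := sum_mem (S := PF K M) hf
  convert this using 1
  ext v; simp

theorem PF_prod {ι : Type*} (s : Finset ι) {f : ι → M → K} (hf : ∀ i ∈ s, f i ∈ PF K M) :
    (fun v => ∏ i ∈ s, f i v) ∈ PF K M := by
  have := prod_mem (S := PF K M) hf
  convert this using 1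
  ext v; simp

theorem PF_det {ι : Type*} [Fintype ι] [DecidableEq ι] {A : M → Matrix ι ι K}
    (hA : ∀ i j, (fun v => A v i j) ∈ PF K M) : (fun v => (A v).det) ∈ PF K M := by
  simp only [Matrix.det_apply']
  refine PF_sum _ fun s _ => PF_mul (PF_const _) (PF_prod _ fun i _ => hA _ _)

theorem PF_adj {ι : Type*} [Fintype ι] [DecidableEq ι] {A : M → Matrix ι ι K}
    (hA : ∀ i j, (fun v => A v i j) ∈ PF K M) (i j : ι) :
    (fun v => (A v).adjugate i j) ∈ PF K M := by
  simp only [Matrix.adjugate_apply]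
  refine PF_det fun a b => ?_
  by_cases h : a = j
  · subst h
    simp only [Matrix.updateRow_self]
    exact PF_const _
  · simp only [Matrix.updateRow_ne h]
    exact hA _ _

/-- evaluating a polynomial whose arguments are polynomial functions -/
theorem PF_eval {τ : Type*} {x : M → τ → K} (hx : ∀ t, (fun v => x v t) ∈ PF K M)
    (p : MvPolynomial τ K) : (fun v => eval (x v) p) ∈ PF K M := by
  induction p using MvPolynomial.induction_on with
  | C a => simpa using PF_const a
  | add p q hp hq => simpa using PF_add hp hq
  | mul_X p t hp => simpa using PF_mul hp (hx t)

theorem PF_comp {Φ : M → M'} (hΦ : ∀ ℓ : M' →ₗ[K] K, (fun v => ℓ (Φ v)) ∈ PF K M) {f : M' → K}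
    (hf : f ∈ PF K M') : (fun v => f (Φ v)) ∈ PF K M := by
  induction hf using Algebra.adjoin_induction with
  | mem x hx => obtain ⟨ℓ, rfl⟩ := hx; exact hΦ ℓ
  | algebraMap r => exact PF_const r
  | add x y _ _ hx hy => exact PF_add hx hy
  | mul x y _ _ hx hy => exact PF_mul hx hy

theorem PF_comp_basis {ι : Type*} [Fintype ι] (b : Module.Basis ι K M') {Φ : M → M'}
    (hΦ : ∀ i, (fun v => b.repr (Φ v) i) ∈ PF K M) {f : M' → K}
    (hf : f ∈ PF K M') : (fun v => f (Φ v)) ∈ PF K M := by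
  refine PF_comp (fun ℓ => ?_) hf
  have : (fun v => ℓ (Φ v)) = fun v => ∑ i, b.repr (Φ v) i * ℓ (b i) := by
    ext v
    conv_lhs => rw [← b.sum_repr (Φ v), map_sum]
    exact Finset.sum_congr rfl fun i _ => by rw [map_smul, smul_eq_mul]
  rw [this]
  exact PF_sum _ fun i _ => PF_mul (hΦ i) (PF_const _)

theorem PF_iff_basis {ι : Type*} [Fintype ι] (b : Module.Basis ι K M) {f : M → K} :
    f ∈ PF K M ↔ ∃ p : MvPolynomial ι K, f = fun v => eval (b.repr v) p := by
  constructor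
  · intro hf
    induction hf using Algebra.adjoin_induction with
    | mem x hx =>
      obtain ⟨ℓ, rfl⟩ := hx
      refine ⟨∑ i, X i * C (ℓ (b i)), ?_⟩
      ext v
      change ℓ v = _
      conv_lhs => rw [← b.sum_repr v, map_sum]
      simp only [map_sum, map_mul, eval_X, eval_C]
      exact Finset.sum_congr rfl fun i _ => by rw [map_smul, smul_eq_mul]
    | algebraMap r => exact ⟨C r, by ext; simp⟩
    | add x y _ _ hx hy =>
      obtain ⟨p, rfl⟩ := hx
      obtain ⟨q, rfl⟩ := hy
      exact ⟨p + q, by ext; simp⟩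
    | mul x y _ _ hx hy =>
      obtain ⟨p, rfl⟩ := hx
      obtain ⟨q, rfl⟩ := hy
      exact ⟨p * q, by ext; simp⟩
  · rintro ⟨p, rfl⟩
    exact PF_eval (fun t => PF_linear (b.coord t)) p

theorem PF_iff {ι : Type*} [Fintype ι] {f : (ι → K) → K} :
    f ∈ PF K (ι → K) ↔ ∃ p : MvPolynomial ι K, f = fun v => eval v p := by
  have := PF_iff_basis (Pi.basisFun K ι) (f := f)
  rw [this]
  rfl

theorem PF_iff_polyEval {f : M → K} :
    f ∈ PF K M ↔ ∃ p, f = polyEval K M p := by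
  constructor
  · intro hf
    induction hf using Algebra.adjoin_induction with
    | mem x hx =>
      obtain ⟨ℓ, rfl⟩ := hx
      refine ⟨X ℓ, ?_⟩
      ext v
      simp [polyEval]
    | algebraMap r => exact ⟨C r, by ext; simp [polyEval]⟩
    | add x y _ _ hx hy =>
      obtain ⟨p, rfl⟩ := hx
      obtain ⟨q, rfl⟩ := hy
      exact ⟨p + q, by ext; simp [polyEval]⟩
    | mul x y _ _ hx hy =>
      obtain ⟨p, rfl⟩ := hx
      obtain ⟨q, rfl⟩ := hy
      exact ⟨p * q, by ext; simp [polyEval]⟩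
  · rintro ⟨p, rfl⟩
    exact PF_eval (fun t => PF_linear t) p

/-- Zariski density of a subset of affine space `K^T`. -/
def ZD {T : Type*} (D : Set (T → K)) : Prop :=
  ∀ g : MvPolynomial T K, (∀ x ∈ D, eval x g = 0) → g = 0

theorem ZD.mono {T : Type*} {D D' : Set (T → K)} (h : ZD D) (hh : D ⊆ D') : ZD D' :=
  fun g hg => h g fun x hx => hg x (hh hx)

theorem ZD.univ [Infinite K] {T : Type*} : ZD (Set.univ : Set (T → K)) :=
  fun g hg => MvPolynomial.funext fun x => by simpa using hg x trivial

theorem ZD.ne {T : Type*} {D : Set (T → K)} (h : ZD D) {g : MvPolynomial T K} (hg : g ≠ 0) :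
    ∃ x ∈ D, eval x g ≠ 0 := by
  by_contra hc
  push Not at hc
  exact hg (h g hc)

theorem ZD.exists_of_iUnion {T : Type*} {ι : Type*} [Finite ι] {D : ι → Set (T → K)}
    (h : ZD (⋃ i, D i)) : ∃ i, ZD (D i) := by
  classical
  by_contra hc
  simp only [ZD] at hc
  push Not at hc
  choose g hg hg0 using hc
  have := Fintype.ofFinite ι
  have h0 : ∏ i, g i ≠ 0 := Finset.prod_ne_zero_iff.2 fun i _ => hg0 i
  obtain ⟨x, hx, hx0⟩ := h.ne h0
  obtain ⟨i, hi⟩ := Set.mem_iUnion.1 hx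
  apply hx0
  rw [map_prod]
  exact Finset.prod_eq_zero (Finset.mem_univ i) (hg i x hi)

theorem ZD.prod [Infinite K] {T₁ T₂ : Type*} {D : Set (T₁ → K)} (h : ZD D)
    {E : (T₁ → K) → Set (T₂ → K)} (hE : ∀ x ∈ D, ZD (E x)) :
    ZD {z : T₁ ⊕ T₂ → K | ∃ x ∈ D, ∃ y ∈ E x, z = Sum.elim x y} := by
  intro g hg
  by_contra hg0
  obtain ⟨z, -, hz⟩ := (ZD.univ (K := K) (T := T₁ ⊕ T₂)).ne hg0
  have h1 : aeval (Sum.elim X (fun t => C (z (Sum.inr t))) : T₁ ⊕ T₂ → MvPolynomial T₁ K) g ≠ 0 := by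
    intro h0
    apply hz
    have := congrArg (eval (fun t => z (Sum.inl t))) h0
    rw [aeval_def, algebraMap_eq, eval_eval₂, map_zero] at this
    rw [← this]
    change _ = eval₂ _ _ g
    rw [← eval₂_id]
    congr 1
    · ext; simp
    · ext t; cases t <;> simp
  obtain ⟨x, hx, hx0⟩ := h.ne h1
  have h2 : aeval (Sum.elim (fun t => C (x t)) X : T₁ ⊕ T₂ → MvPolynomial T₂ K) g ≠ 0 := by
    intro h0
    apply hx0
    have := congrArg (eval (fun t => z (Sum.inr t))) h0
    rw [aeval_def, algebraMap_eq, eval_eval₂, map_zero] at this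
    rw [← this, aeval_def, algebraMap_eq, eval_eval₂]
    congr 1
    · ext; simp
    · ext t; cases t <;> simp
  obtain ⟨y, hy, hy0⟩ := (hE x hx).ne h2
  apply hy0
  rw [← hg (Sum.elim x y) ⟨x, hx, y, hy, rfl⟩]
  rw [aeval_def, algebraMap_eq, eval_eval₂]
  change _ = eval₂ _ _ g
  congr 1
  · ext; simp
  · ext t; cases t <;> simp

theorem ZD.card_le {T U : Type*} [Fintype T] [Fintype U] {φ : T → (U → K) → K}
    (hφ : ∀ t, φ t ∈ PF K (U → K)) (h : ZD (Set.range fun u t => φ t u)) :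
    Fintype.card T ≤ Fintype.card U := by
  choose p hp using fun t => PF_iff.1 (hφ t)
  apply aux_card_le' K (z := p)
  rw [algebraicIndependent_iff]
  intro g hg
  apply h
  rintro _ ⟨u, rfl⟩
  have := congrArg (eval u) hg
  rw [aeval_def, algebraMap_eq, eval_eval₂, map_zero] at this
  rw [← this]
  change eval₂ _ _ g = _
  congr 1
  · ext; simp
  · ext t; simp [hp]

end PolyFun

noncomputable section ZarTop

variable {K : Type*} [Field K] {M : Type*} [AddCommGroup M] [Module K M] [τ : TopologicalSpace M]
  {ι : Type*} [Fintype ι]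

theorem zar_isClosed_iff (hτ : τ = zariskiTopology K M) (b : Module.Basis ι K M) (S : Set M) :
    IsClosed S ↔ ∃ A : Set (MvPolynomial ι K), S = {v | ∀ p ∈ A, eval (b.repr v) p = 0} := by
  have h0 : IsClosed S ↔ S ∈ zariskiCloseds K M := by
    rw [← isOpen_compl_iff, hτ]
    change Sᶜᶜ ∈ zariskiCloseds K M ↔ _
    rw [compl_compl]
  rw [h0]
  constructor
  · rintro ⟨B, rfl⟩
    choose q hq using fun p : MvPolynomial (M →ₗ[K] K) K =>
      (PF_iff_basis b).1 (PF_iff_polyEval.2 ⟨p, rfl⟩)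
    refine ⟨q '' B, ?_⟩
    ext v
    constructor
    · rintro h _ ⟨p, hp, rfl⟩
      rw [← congrFun (hq p) v]
      exact h p hp
    · intro h p hp
      rw [congrFun (hq p) v]
      exact h _ ⟨p, hp, rfl⟩
  · rintro ⟨B, rfl⟩
    choose q hq using fun p : MvPolynomial ι K =>
      PF_iff_polyEval.1 ((PF_iff_basis b).2 ⟨p, rfl⟩)
    refine ⟨q '' B, ?_⟩
    ext v
    constructor
    · rintro h _ ⟨p, hp, rfl⟩
      rw [← congrFun (hq p) v]
      exact h p hp
    · intro h p hp
      rw [show eval (b.repr v) p = _ from congrFun (hq p) v]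
      exact h _ ⟨p, hp, rfl⟩

theorem eval_aeval_aux {K : Type*} [Field K] {T ι : Type*} (x : ι → K) (p : T → MvPolynomial ι K) (g : MvPolynomial T K) :
    eval x (aeval p g) = eval (fun t => eval x (p t)) g := by
  have := comp_aeval_apply (f := p) (aeval (R := K) x) g
  simpa [aeval_eq_eval] using this

/-- vanishing ideal in coordinates -/
def IV (b : Module.Basis ι K M) (S : Set M) : Ideal (MvPolynomial ι K) where
  carrier := {p | ∀ v ∈ S, eval (b.repr v) p = 0}
  add_mem' := by
    intro p q hp hq v hv
    rw [map_add, hp v hv, hq v hv, add_zero]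
  zero_mem' := by intro v _; simp
  smul_mem' := by
    intro c p hp v hv
    rw [smul_eq_mul, map_mul, hp v hv, mul_zero]

theorem mem_IV (b : Module.Basis ι K M) (S : Set M) (p : MvPolynomial ι K) :
    p ∈ IV b S ↔ ∀ v ∈ S, eval (b.repr v) p = 0 := Iff.rfl

theorem zar_mem_closure (hτ : τ = zariskiTopology K M) (b : Module.Basis ι K M) (S : Set M) (v : M) :
    v ∈ closure S ↔ ∀ p ∈ IV b S, eval (b.repr v) p = 0 := by
  constructor
  · intro hv p hp
    have hc : IsClosed {v | ∀ p ∈ IV b S, eval (b.repr v) p = 0} :=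
      (zar_isClosed_iff hτ b _).2 ⟨_, rfl⟩
    exact closure_minimal (fun w hw p hp => hp w hw) hc hv p hp
  · intro h
    obtain ⟨A, hA⟩ := (zar_isClosed_iff hτ b (closure S)).1 isClosed_closure
    rw [hA]
    intro p hp
    apply h
    intro w hw
    have := subset_closure hw
    rw [hA] at this
    exact this p hp

theorem IV_closure (hτ : τ = zariskiTopology K M) (b : Module.Basis ι K M) (S : Set M) :
    IV b (closure S) = IV b S := by
  ext p
  exact ⟨fun h v hv => h v (subset_closure hv), fun h v hv => (zar_mem_closure hτ b S v).1 hv p h⟩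

theorem zar_irred_of (hτ : τ = zariskiTopology K M) (b : Module.Basis ι K M) {S : Set M}
    (h : (IV b S).IsPrime) : IsIrreducible S := by
  constructor
  · by_contra hc
    rw [Set.not_nonempty_iff_eq_empty] at hc
    apply h.ne_top
    rw [Ideal.eq_top_iff_one]
    intro v hv
    rw [hc] at hv
    exact hv.elim
  · rw [isPreirreducible_iff_isClosed_union_isClosed]
    intro z₁ z₂ h₁ h₂ hS
    obtain ⟨A₁, rfl⟩ := (zar_isClosed_iff hτ b _).1 h₁
    obtain ⟨A₂, rfl⟩ := (zar_isClosed_iff hτ b _).1 h₂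
    by_contra hc
    push Not at hc
    obtain ⟨hc1, hc2⟩ := hc
    obtain ⟨v, hv, hv'⟩ := Set.not_subset.1 hc1
    obtain ⟨w, hw, hw'⟩ := Set.not_subset.1 hc2
    simp only [Set.mem_ofPred_eq] at hv' hw'
    push Not at hv' hw'
    obtain ⟨p, hp, hpv⟩ := hv'
    obtain ⟨q, hq, hqw⟩ := hw'
    have : p * q ∈ IV b S := by
      intro u hu
      rw [map_mul]
      rcases hS hu with h | h
      · rw [h p hp, zero_mul]
      · rw [h q hq, mul_zero]
    rcases h.mem_or_mem this with h | h
    · exact hpv (h v hv)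
    · exact hqw (h w hw)

theorem zar_prime_of (hτ : τ = zariskiTopology K M) (b : Module.Basis ι K M) {S : Set M}
    (h : IsIrreducible S) : (IV b S).IsPrime := by
  obtain ⟨⟨v, hv⟩, h2⟩ := h
  refine ⟨?_, ?_⟩
  · intro ht
    have := (Ideal.eq_top_iff_one _).1 ht v hv
    simp at this
  · intro p q hpq
    rw [isPreirreducible_iff_isClosed_union_isClosed] at h2
    have := h2 {v | ∀ r ∈ ({p} : Set (MvPolynomial ι K)), eval (b.repr v) r = 0}
      {v | ∀ r ∈ ({q} : Set (MvPolynomial ι K)), eval (b.repr v) r = 0}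
      ((zar_isClosed_iff hτ b _).2 ⟨_, rfl⟩) ((zar_isClosed_iff hτ b _).2 ⟨_, rfl⟩) ?_
    · rcases this with h | h
      · left; intro w hw; exact h hw p rfl
      · right; intro w hw; exact h hw q rfl
    · intro w hw
      have := hpq w hw
      rw [map_mul, mul_eq_zero] at this
      rcases this with h | h
      · left; rintro r rfl; exact h
      · right; rintro r rfl; exact h

theorem zar_dim_le (hτ : τ = zariskiTopology K M) (b : Module.Basis ι K M) (S : Set M) :
    dimSet S ≤ ringKrullDim (MvPolynomial ι K ⧸ IV b S) := by
  rw [← PrimeSpectrum.topologicalKrullDim_eq_ringKrullDim]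
  have hker : ∀ v : closure S, ∀ p ∈ IV b S, eval (b.repr v.1) p = 0 := fun v =>
    (zar_mem_closure hτ b S v).1 v.2
  let φ : closure S → PrimeSpectrum (MvPolynomial ι K ⧸ IV b S) := fun v =>
    ⟨RingHom.ker (Ideal.Quotient.lift (IV b S) (eval (b.repr v.1)) (hker v)), RingHom.ker_isPrime _⟩
  have hφ : ∀ v p, Ideal.Quotient.mk _ p ∈ (φ v).asIdeal ↔ eval (b.repr v.1) p = 0 := by
    intro v p
    simp only [φ]
    rw [RingHom.mem_ker, Ideal.Quotient.lift_mk]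
  refine Topology.IsInducing.topologicalKrullDim_le (f := φ) ?_
  rw [Topology.isInducing_iff]
  apply TopologicalSpace.ext_isClosed
  intro s
  rw [isClosed_induced_iff, isClosed_induced_iff]
  constructor
  · rintro ⟨t, ht, rfl⟩
    obtain ⟨A, rfl⟩ := (zar_isClosed_iff hτ b _).1 ht
    refine ⟨PrimeSpectrum.zeroLocus (Ideal.Quotient.mk (IV b S) '' A),
      PrimeSpectrum.isClosed_zeroLocus _, ?_⟩
    ext v
    simp only [Set.mem_preimage, PrimeSpectrum.mem_zeroLocus, Set.image_subset_iff]
    constructor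
    · intro h p hp; exact (hφ v p).1 (h hp)
    · intro h p hp; exact (hφ v p).2 (h p hp)
  · rintro ⟨t, ht, rfl⟩
    obtain ⟨A, rfl⟩ := (PrimeSpectrum.isClosed_iff_zeroLocus _).1 ht
    refine ⟨_, (zar_isClosed_iff hτ b _).2 ⟨Ideal.Quotient.mk (IV b S) ⁻¹' A, rfl⟩, ?_⟩
    ext v
    simp only [Set.mem_preimage, PrimeSpectrum.mem_zeroLocus, Set.mem_ofPred_eq]
    constructor
    · intro h p hp
      obtain ⟨p, rfl⟩ := Ideal.Quotient.mk_surjective p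
      exact (hφ v p).2 (h p hp)
    · intro h p hp; exact (hφ v p).1 (h hp)

theorem zar_le_dim [IsAlgClosed K] (hτ : τ = zariskiTopology K M) (b : Module.Basis ι K M)
    (S : Set M) : ringKrullDim (MvPolynomial ι K ⧸ IV b S) ≤ dimSet S := by
  let J : PrimeSpectrum (MvPolynomial ι K ⧸ IV b S) → Ideal (MvPolynomial ι K) := fun Q =>
    Q.asIdeal.comap (Ideal.Quotient.mk (IV b S))
  have hJp : ∀ Q, (J Q).IsPrime := fun Q => Ideal.comap_isPrime _ _
  have hJI : ∀ Q, IV b S ≤ J Q := fun Q p hp => by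
    simp only [J, Ideal.mem_comap]
    rw [Ideal.Quotient.eq_zero_iff_mem.2 hp]
    exact zero_mem _
  let VV : PrimeSpectrum (MvPolynomial ι K ⧸ IV b S) → Set M := fun Q =>
    {v | ∀ p ∈ J Q, eval (b.repr v) p = 0}
  have hVI : ∀ Q, IV b (VV Q) = J Q := by
    intro Q
    have := hJp Q
    have h := MvPolynomial.IsPrime.vanishingIdeal_zeroLocus (K := K) (J Q)
    rw [← h]
    ext p
    rw [mem_IV, mem_vanishingIdeal_iff]
    constructor
    · intro hp x hx
      have := hp (b.equivFun.symm x) (by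
        intro q hq
        have := hx q hq
        rw [← Module.Basis.equivFun_apply, LinearEquiv.apply_symm_apply]
        simpa [aeval_eq_eval] using this)
      rw [← Module.Basis.equivFun_apply, LinearEquiv.apply_symm_apply] at this
      simpa [aeval_eq_eval] using this
    · intro hp v hv
      have := hp (b.repr v) (by
        intro q hq
        simpa [aeval_eq_eval] using hv q hq)
      simpa [aeval_eq_eval] using this
  have hVS : ∀ Q, VV Q ⊆ closure S := by
    intro Q v hv
    rw [zar_mem_closure hτ b]
    exact fun p hp => hv p (hJI Q hp)
  have hVc : ∀ Q, IsClosed (VV Q) := fun Q => (zar_isClosed_iff hτ b _).2 ⟨_, rfl⟩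
  have hVi : ∀ Q, IsIrreducible (VV Q) := fun Q => zar_irred_of hτ b (by rw [hVI]; exact hJp Q)
  have hVi' : ∀ Q, IsIrreducible (Subtype.val ⁻¹' (VV Q) : Set (closure S)) := by
    intro Q
    obtain ⟨⟨v, hv⟩, h2⟩ := hVi Q
    refine ⟨⟨⟨v, hVS Q hv⟩, hv⟩, ?_⟩
    intro u w hu hw
    obtain ⟨u', hu', rfl⟩ := isOpen_induced_iff.1 hu
    obtain ⟨w', hw', rfl⟩ := isOpen_induced_iff.1 hw
    rintro ⟨x, hx, hx'⟩ ⟨y, hy, hy'⟩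
    obtain ⟨z, hz, hz1, hz2⟩ := h2 u' w' hu' hw' ⟨x, hx, hx'⟩ ⟨y, hy, hy'⟩
    exact ⟨⟨z, hVS Q hz⟩, hz, hz1, hz2⟩
  unfold dimSet topologicalKrullDim ringKrullDim
  rw [← Order.krullDim_orderDual (α := TopologicalSpace.IrreducibleCloseds (closure S))]
  refine Order.krullDim_le_of_strictMono (fun Q => OrderDual.toDual
    (⟨Subtype.val ⁻¹' (VV Q), hVi' Q, (hVc Q).preimage continuous_subtype_val⟩ :
      TopologicalSpace.IrreducibleCloseds (closure S))) ?_
  have key : ∀ Q R, (Subtype.val ⁻¹' (VV Q) : Set (closure S)) ⊆ Subtype.val ⁻¹' (VV R) → R ≤ Q := by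
    intro Q R h
    have h1 : VV Q ⊆ VV R := fun v hv =>
      h (a := ⟨v, hVS Q hv⟩) (Set.mem_preimage.2 hv)
    have h2 : J R ≤ J Q := by
      rw [← hVI, ← hVI]
      exact fun p hp v hv => hp v (h1 hv)
    intro p hp
    obtain ⟨p, rfl⟩ := Ideal.Quotient.mk_surjective p
    exact h2 hp
  intro Q R hQR
  rw [lt_iff_le_not_ge] at hQR ⊢
  constructor
  · change (Subtype.val ⁻¹' (VV R) : Set (closure S)) ⊆ Subtype.val ⁻¹' (VV Q)
    intro v hv p hp
    exact hv p (hQR.1 hp)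
  · intro h
    exact hQR.2 (key Q R h)

theorem zar_dim_mono {S T : Set M} (h : S ⊆ T) : dimSet S ≤ dimSet T :=
  Topology.IsInducing.topologicalKrullDim_le
    (f := Set.inclusion (closure_mono h)) (Topology.IsEmbedding.inclusion (closure_mono h)).isInducing

theorem zar_upper (hτ : τ = zariskiTopology K M) (b : Module.Basis ι K M) {S : Set M}
    (hS : IsIrreducible S) : ∃ s : ℕ, ∃ f : Fin s → M → K, (∀ t, f t ∈ PF K M) ∧ dimSet S ≤ s ∧
      ∀ D : Set M, S ⊆ closure D → ZD {z | ∃ F ∈ D, z = fun t => f t F} := by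
  have := zar_prime_of hτ b hS
  obtain ⟨s, y, hy, -, hs⟩ := aux_noether K (MvPolynomial ι K ⧸ IV b S)
  choose p hp using fun t => Ideal.Quotient.mk_surjective (y t)
  refine ⟨s, fun t v => eval (b.repr v) (p t), fun t => (PF_iff_basis b).2 ⟨p t, rfl⟩, ?_, ?_⟩
  · rw [← hs]; exact zar_dim_le hτ b S
  · intro D hD g hg
    rw [algebraicIndependent_iff] at hy
    apply hy
    have : aeval y g = Ideal.Quotient.mk (IV b S) (bind₁ p g) := by
      have h1 : y = fun t => Ideal.Quotient.mkₐ K (IV b S) (p t) := funext fun t => (hp t).symm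
      rw [h1, ← Ideal.Quotient.mkₐ_eq_mk K, bind₁, ← comp_aeval]
      rfl
    rw [this, Ideal.Quotient.eq_zero_iff_mem]
    have h2 : bind₁ p g ∈ IV b D := by
      intro v hv
      have := hg _ ⟨v, hv, rfl⟩
      rw [← this]
      exact eval_aeval_aux _ _ _
    rw [← IV_closure hτ] at h2
    exact fun v hv => h2 v (hD hv)

theorem zar_lower [IsAlgClosed K] (hτ : τ = zariskiTopology K M) (b : Module.Basis ι K M) {S : Set M}
    (hS : IsIrreducible S) {T : Type*} [Fintype T] {f : T → M → K} (hf : ∀ t, f t ∈ PF K M)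
    (h : ZD {z | ∃ F ∈ S, z = fun t => f t F}) : (Fintype.card T : WithBot ℕ∞) ≤ dimSet S := by
  refine le_trans ?_ (zar_le_dim hτ b S)
  have := zar_prime_of hτ b hS
  obtain ⟨s, y, -, hy, hs⟩ := aux_noether K (MvPolynomial ι K ⧸ IV b S)
  rw [hs]
  choose p hp using fun t => (PF_iff_basis b).1 (hf t)
  have := aux_card_le K (MvPolynomial ι K ⧸ IV b S) hy
    (z := fun t => Ideal.Quotient.mkₐ K (IV b S) (p t)) ?_
  · exact_mod_cast this
  rw [algebraicIndependent_iff]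
  intro g hg
  rw [← comp_aeval] at hg
  simp only [AlgHom.comp_apply] at hg
  rw [Ideal.Quotient.mkₐ_eq_mk, Ideal.Quotient.eq_zero_iff_mem] at hg
  apply h
  rintro _ ⟨v, hv, rfl⟩
  have := hg v hv
  rw [← this, eval_aeval_aux]
  congr 2
  ext t
  exact congrFun (hp t) v

end ZarTop

noncomputable section Forms

/-- exponents of degree `d` -/
abbrev Mon (σ : Type*) (d : ℕ) : Type _ := {m : σ →₀ ℕ // m.degree = d}

instance Mon.instFinite (σ : Type*) [Finite σ] (d : ℕ) : Finite (Mon σ d) :=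
  ((Finsupp.finite_of_degree_le (σ := σ) d).subset (fun _ hm => le_of_eq hm)).to_subtype

instance Mon.instFintype (σ : Type*) [Finite σ] (d : ℕ) : Fintype (Mon σ d) := Fintype.ofFinite _

variable {K : Type*} [Field K] {σ : Type*} [Finite σ] {d : ℕ}

theorem homog_sum {G : MvPolynomial σ K} (hG : G.IsHomogeneous d) :
    G = ∑ m : Mon σ d, monomial m.1 (coeff m.1 G) := by
  classical
  ext n
  rw [coeff_sum]
  simp only [coeff_monomial]
  by_cases hn : n.degree = d
  · rw [Finset.sum_eq_single ⟨n, hn⟩]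
    · simp
    · intro m _ hm
      rw [if_neg]
      intro h
      exact hm (Subtype.ext h)
    · simp
  · rw [hG.coeff_eq_zero hn, Finset.sum_eq_zero]
    intro m _
    rw [if_neg]
    rintro rfl
    exact hn m.2

theorem homog_eval {G : MvPolynomial σ K} (hG : G.IsHomogeneous d) (x : σ → K) :
    eval x G = ∑ m : Mon σ d, coeff m.1 G * eval x (monomial m.1 1) := by
  conv_lhs => rw [homog_sum hG, map_sum]
  refine Finset.sum_congr rfl fun m _ => ?_
  simp [eval_monomial]

/-- the monomial basis of forms -/
def Wb (K : Type*) [Field K] (σ : Type*) [Finite σ] (d : ℕ) :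
    Module.Basis (Mon σ d) K (homogeneousSubmodule σ K d) :=
  Module.Basis.ofEquivFun
    { toFun := fun G m => coeff m.1 (G : MvPolynomial σ K)
      invFun := fun c => ⟨∑ m, monomial m.1 (c m), by
        refine Submodule.sum_mem _ fun m _ => ?_
        exact isHomogeneous_monomial _ m.2⟩
      map_add' := by intro x y; ext m; simp
      map_smul' := by intro x y; ext m; simp
      left_inv := by
        intro G
        apply Subtype.ext
        exact (homog_sum G.2).symm
      right_inv := by
        classical
        intro c
        ext m
        simp only [coeff_sum, coeff_monomial]
        rw [Finset.sum_eq_single m]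
        · simp
        · intro n _ hn
          rw [if_neg]
          intro h
          exact hn (Subtype.ext h)
        · simp }

theorem Wb_repr (G : homogeneousSubmodule σ K d) (m : Mon σ d) :
    (Wb K σ d).repr G m = coeff m.1 (G : MvPolynomial σ K) := by
  rw [← Module.Basis.equivFun_apply, Wb, Module.Basis.equivFun_ofEquivFun]
  rfl

theorem exists_det_ne {n : Type*} [Fintype n] [DecidableEq n] {I : Type*} (w : I → n → K)
    (h : ∀ c : n → K, (∀ i, ∑ j, c j * w i j = 0) → c = 0) :
    ∃ B : n → I, (Matrix.of fun i => w (B i)).det ≠ 0 := by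
  have hs : Submodule.span K (Set.range w) = ⊤ := by
    by_contra hc
    obtain ⟨f, hf, hle⟩ := Submodule.exists_le_ker_of_lt_top _ (lt_top_iff_ne_top.2 hc)
    apply hf
    have hexp : ∀ x : n → K, f x = ∑ j, f (Pi.single j 1) * x j := by
      intro x
      conv_lhs => rw [← Finset.univ_sum_single x, map_sum]
      refine Finset.sum_congr rfl fun j _ => ?_
      have : (Pi.single j (x j) : n → K) = x j • Pi.single j 1 := by
        rw [← Pi.single_smul, smul_eq_mul, mul_one]
      rw [this, map_smul, smul_eq_mul, mul_comm]
    have := h (fun j => f (Pi.single j 1)) (fun i => by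
      rw [← hexp]
      exact hle (Submodule.subset_span ⟨i, rfl⟩))
    refine LinearMap.ext fun x => ?_
    rw [hexp x]
    exact Finset.sum_eq_zero fun j _ => by rw [show f (Pi.single j 1) = 0 from congrFun this j, zero_mul]
  obtain ⟨κ, a, ha, hsp, hli⟩ := exists_linearIndependent' K w
  let b := Module.Basis.mk hli (by rw [hsp, hs])
  have e := (Pi.basisFun K n).indexEquiv b
  refine ⟨fun i => a (e i), ?_⟩
  have h2 : LinearIndependent K (fun i => w (a (e i))) := hli.comp e e.injective
  have h3 := Matrix.linearIndependent_rows_iff_isUnit (A := Matrix.of fun i => w (a (e i)))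
  have h4 := h3.1 h2
  rw [Matrix.isUnit_iff_isUnit_det] at h4
  exact h4.ne_zero

theorem elim_aux [IsAlgClosed K] {T : Type*} [Fintype T] {A : Type*} {M : Type*} [AddCommGroup M]
    [Module K M] (Λ : A → M →ₗ[K] MvPolynomial T K) (d : ℕ) (hΛ : ∀ α F, (Λ α F).IsHomogeneous d)
    (F0 : M) (h : ∀ p : T → K, (∀ α, eval p (Λ α F0) = 0) → p = 0) :
    ∃ f ∈ PF K M, f F0 ≠ 0 ∧
      ∀ F, f F ≠ 0 → ∀ p : T → K, (∀ α, eval p (Λ α F) = 0) → p = 0 := by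
  classical
  set I := Ideal.span (Set.range fun α => Λ α F0) with hI
  have h1 : idealOfVars T K ≤ I.radical := by
    rw [← vanishingIdeal_zeroLocus_eq_radical (K := K), idealOfVars, Ideal.span_le]
    rintro _ ⟨t, rfl⟩
    intro p hp
    have : p = 0 := h p fun α => by
      have := hp (Λ α F0) (Ideal.subset_span ⟨α, rfl⟩)
      simpa [aeval_eq_eval] using this
    simp [this]
  obtain ⟨N, hN⟩ := Ideal.exists_pow_le_of_le_radical_of_fg h1 (idealOfVars_fg T K)
  set D := N + d + 1 with hD
  have hmon : ∀ m : Mon T D, monomial m.1 (1 : K) ∈ I := by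
    intro m
    apply hN
    rw [mem_pow_idealOfVars_iff]
    intro x hx
    rw [support_monomial, if_neg one_ne_zero, Finset.mem_singleton] at hx
    rw [hx, m.2]
    omega
  -- the spanning family
  obtain ⟨B, hB⟩ := exists_det_ne (K := K) (n := Mon T D) (I := Mon T (D - d) × A)
    (fun i m => coeff m.1 (monomial i.1.1 1 * Λ i.2 F0)) (by
    intro c hc
    have key : ∀ G ∈ I, ∀ β : T →₀ ℕ, ∑ m : Mon T D, c m * coeff m.1 (monomial β 1 * G) = 0 := by
      intro G hG
      refine Submodule.span_induction (p := fun G _ => ∀ β : T →₀ ℕ,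
        ∑ m : Mon T D, c m * coeff m.1 (monomial β 1 * G) = 0) ?_ ?_ ?_ ?_ hG
      · rintro _ ⟨α, rfl⟩ β
        by_cases hβ : β.degree = D - d
        · exact hc (⟨β, hβ⟩, α)
        · refine Finset.sum_eq_zero fun m _ => ?_
          have hh : (monomial β 1 * Λ α F0).IsHomogeneous (β.degree + d) :=
            (isHomogeneous_monomial 1 rfl).mul (hΛ α F0)
          rw [hh.coeff_eq_zero, mul_zero]
          rw [m.2]
          omega
      · intro β; simp
      · intro x y _ _ hx hy β
        simp only [mul_add, coeff_add, Finset.sum_add_distrib, hx β, hy β, add_zero]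
      · intro a x _ hx
        rw [smul_eq_mul]
        induction a using MvPolynomial.induction_on generalizing x with
        | C a =>
          intro β
          have := hx β
          simp only [mul_left_comm _ (C a) _, coeff_C_mul]
          simp only [mul_left_comm _ a _]
          rw [← Finset.mul_sum, this, mul_zero]
        | add p q hp hq =>
          intro β
          simp only [add_mul, mul_add, coeff_add, Finset.sum_add_distrib]
          rw [hp x ‹_› hx β, hq x ‹_› hx β, add_zero]
        | mul_X p t hp =>
          rw [mul_assoc]
          refine hp _ (Ideal.mul_mem_left _ _ ‹_›) ?_
          intro β
          have := hx (β + Finsupp.single t 1)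
          rw [← this]
          refine Finset.sum_congr rfl fun m _ => ?_
          rw [← mul_assoc, X, monomial_mul, one_mul]
    ext m
    have := key _ (hmon m) 0
    simp only [monomial_zero', C_1, one_mul, coeff_monomial] at this
    rw [Finset.sum_eq_single m] at this
    · simpa using this
    · intro n _ hn
      rw [if_neg, mul_zero]
      intro h
      exact hn (Subtype.ext h.symm)
    · simp)
  refine ⟨fun F => (Matrix.of fun (i m : Mon T D) =>
    coeff m.1 (monomial (B i).1.1 1 * Λ (B i).2 F)).det, ?_, hB, ?_⟩
  · refine PF_det fun i m => ?_
    exact PF_linear (((lcoeff K m.1).comp (LinearMap.mulLeft K (monomial (B i).1.1 1))).comp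
      (Λ (B i).2))
  · intro F hF p hp
    have h2 := Matrix.eq_zero_of_mulVec_eq_zero hF (v := fun m => eval p (monomial m.1 1)) (by
      ext i
      have hh : (monomial (B i).1.1 1 * Λ (B i).2 F).IsHomogeneous D := by
        have := (isHomogeneous_monomial (1 : K) (B i).1.2).mul (hΛ (B i).2 F)
        rwa [show D - d + d = D by omega] at this
      have h3 := homog_eval hh p
      rw [map_mul, hp, mul_zero] at h3
      exact h3.symm)
    ext t
    have h5 : eval p (monomial (Finsupp.single t D) 1) = 0 :=
      congrFun h2 ⟨Finsupp.single t D, by simp⟩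
    rw [← X_pow_eq_monomial, map_pow, eval_X] at h5
    exact eq_zero_of_pow_eq_zero h5

end Forms

noncomputable section Lines

variable {K : Type*} [Field K] {σ : Type*} [Fintype σ] {d : ℕ}

/-- substitution of a linear map -/
def lsub (A : Matrix σ σ K) : MvPolynomial σ K →ₐ[K] MvPolynomial σ K :=
  aeval fun s => ∑ t, C (A s t) * X t

theorem eval_lsub (A : Matrix σ σ K) (x : σ → K) (G : MvPolynomial σ K) :
    eval x (lsub A G) = eval (A.mulVec x) G := by
  rw [lsub, eval_aeval_aux]
  congr 2
  ext s
  simp [Matrix.mulVec, dotProduct]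

theorem homog_lsub (A : Matrix σ σ K) {G : MvPolynomial σ K} (hG : G.IsHomogeneous d) :
    (lsub A G).IsHomogeneous d := by
  have := hG.aeval (fun s => ∑ t, C (A s t) * X t) (n := 1) (fun s =>
    IsHomogeneous.sum _ _ _ fun t _ => isHomogeneous_C_mul_X _ _)
  rwa [one_mul] at this

theorem coeff_eq_evals [Infinite K] (σ : Type*) [Finite σ] (d : ℕ) (m : Mon σ d) : ∃ (B : Mon σ d → σ → K) (c : Mon σ d → K),
    ∀ G : MvPolynomial σ K, G.IsHomogeneous d → coeff m.1 G = ∑ k, c k * eval (B k) G := by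
  classical
  obtain ⟨B, hB⟩ := exists_det_ne (K := K) (n := Mon σ d) (I := σ → K)
    (fun x m => eval x (monomial m.1 1)) (by
    intro c hc
    have : (∑ j : Mon σ d, monomial j.1 (c j)) = 0 := by
      apply MvPolynomial.funext
      intro x
      rw [map_zero, ← hc x, map_sum]
      refine Finset.sum_congr rfl fun m _ => ?_
      simp [eval_monomial]
    ext m
    have h2 := congrArg (coeff m.1) this
    rw [coeff_sum, coeff_zero] at h2
    simp only [coeff_monomial] at h2
    rw [Finset.sum_eq_single m] at h2
    · simpa using h2
    · intro n _ hn
      rw [if_neg]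
      intro h
      exact hn (Subtype.ext h)
    · simp)
  set Mx : Matrix (Mon σ d) (Mon σ d) K := Matrix.of fun i m => eval (B i) (monomial m.1 1) with hMx
  have hu : IsUnit Mx.det := isUnit_iff_ne_zero.2 hB
  refine ⟨B, fun k => Mx⁻¹ m k, fun G hG => ?_⟩
  have h1 : Mx.mulVec (fun m => coeff m.1 G) = fun k => eval (B k) G := by
    ext k
    rw [homog_eval hG]
    exact Finset.sum_congr rfl fun j _ => mul_comm _ _
  have h2 : Mx⁻¹.mulVec (Mx.mulVec (fun m => coeff m.1 G)) = fun m => coeff m.1 G := by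
    rw [Matrix.mulVec_mulVec, Matrix.nonsing_inv_mul _ hu, Matrix.one_mulVec]
  rw [h1] at h2
  exact (congrFun h2 m).symm

/-- the space of tuples of forms -/
abbrev Tup (K : Type*) [Field K] (σ : Type*) (J : Type*) (d : ℕ) : Type _ :=
  J → homogeneousSubmodule σ K d

variable {J : Type*} [Fintype J]

/-- basis of the space of tuples -/
def Tb (K : Type*) [Field K] (σ : Type*) [Finite σ] (J : Type*) [Fintype J] (d : ℕ) :
    Module.Basis ((_ : J) × Mon σ d) K (Tup K σ J d) := Pi.basis fun _ => Wb K σ d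

theorem Tb_repr (F : Tup K σ J d) (i : J) (m : Mon σ d) :
    (Tb K σ J d).repr F ⟨i, m⟩ = coeff m.1 (F i : MvPolynomial σ K) := by
  rw [Tb, Pi.basis_repr, Wb_repr]

theorem PF_tup_eval (i : J) (x : σ → K) :
    (fun F : Tup K σ J d => eval x (F i : MvPolynomial σ K)) ∈ PF K (Tup K σ J d) := by
  have := PF_linear (((aeval (R := K) x).toLinearMap.comp
    (homogeneousSubmodule σ K d).subtype).comp (LinearMap.proj (R := K) i : Tup K σ J d →ₗ[K] _))
  simpa [aeval_eq_eval] using this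

theorem PF_tup_coeff (i : J) (m : σ →₀ ℕ) :
    (fun F : Tup K σ J d => coeff m (F i : MvPolynomial σ K)) ∈ PF K (Tup K σ J d) :=
  PF_linear (((lcoeff K m).comp
    (homogeneousSubmodule σ K d).subtype).comp (LinearMap.proj (R := K) i : Tup K σ J d →ₗ[K] _))

theorem PF_comp_tup [Infinite K] {M : Type*} [AddCommGroup M] [Module K M] {Φ : M → Tup K σ J d}
    (hΦ : ∀ i x, (fun v => eval x (Φ v i : MvPolynomial σ K)) ∈ PF K M) {f : Tup K σ J d → K}
    (hf : f ∈ PF K (Tup K σ J d)) : (fun v => f (Φ v)) ∈ PF K M := by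
  refine PF_comp_basis (Tb K σ J d) ?_ hf
  rintro ⟨i, m⟩
  simp only [Tb_repr]
  obtain ⟨B, c, h⟩ := coeff_eq_evals (K := K) σ d m
  have : (fun v => coeff m.1 (Φ v i : MvPolynomial σ K)) =
      fun v => ∑ k, c k * eval (B k) (Φ v i : MvPolynomial σ K) := by
    ext v
    exact h _ (Φ v i).2
  rw [this]
  exact PF_sum _ fun k _ => PF_mul (PF_const _) (hΦ _ _)

/-- the line locus -/
def LS (K : Type*) [Field K] (σ : Type*) (J : Type*) (d : ℕ) : Set (Tup K σ J d) :=
  {F | ∃ v w : σ → K, LinearIndependent K ![v, w] ∧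
    ∀ i : J, ∀ s t : K, eval (fun j => s * v j + t * w j) (F i : MvPolynomial σ K) = 0}

section Closed
variable [LinearOrder σ]

/-- generic alternating matrix -/
def altP (K : Type*) [Field K] (σ : Type*) [LinearOrder σ] (s t : σ) :
    MvPolynomial {q : σ × σ // q.1 < q.2} K :=
  if h : s < t then X ⟨(s, t), h⟩ else if h : t < s then - X ⟨(t, s), h⟩ else 0

theorem LS_iff (F : Tup K σ J d) : F ∈ LS K σ J d ↔ ∃ p : {q : σ × σ // q.1 < q.2} → K, p ≠ 0 ∧
    ∀ (i : J) (ξ : σ → K), eval (fun s => ∑ t, ξ t * eval p (altP K σ s t))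
      (F i : MvPolynomial σ K) = 0 := by
  constructor
  · rintro ⟨v, w, hli, h⟩
    rw [LinearIndependent.pair_iff] at hli
    have hp : ∀ s t, eval (fun q : {q : σ × σ // q.1 < q.2} => v q.1.1 * w q.1.2 - w q.1.1 * v q.1.2)
        (altP K σ s t) = v s * w t - w s * v t := by
      intro s t
      rcases lt_trichotomy s t with hst | rfl | hst
      · simp [altP, hst]
      · simp [altP, mul_comm]
      · simp [altP, hst, hst.not_gt]; ring
    refine ⟨fun q => v q.1.1 * w q.1.2 - w q.1.1 * v q.1.2, ?_, ?_⟩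
    · intro h0
      rw [h0] at hp
      have h1 : ∀ s t, v s * w t - w s * v t = 0 := by
        intro s t
        rw [← hp]
        unfold altP
        split_ifs <;> simp
      have hv : v = 0 := by
        ext s
        have := hli (-w s) (v s) (by
          ext t
          simp only [Pi.add_apply, Pi.smul_apply, smul_eq_mul, Pi.zero_apply]
          linear_combination h1 s t)
        exact this.2
      have := hli 1 0 (by rw [hv]; simp)
      exact one_ne_zero this.1
    · intro i ξ
      simp only [hp]
      rw [← h i (∑ t, ξ t * w t) (- ∑ t, ξ t * v t)]
      congr 2
      ext s
      rw [neg_mul, Finset.sum_mul, Finset.sum_mul, ← sub_eq_add_neg, ← Finset.sum_sub_distrib]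
      exact Finset.sum_congr rfl fun t _ => by ring
  · rintro ⟨p, hp, h⟩
    obtain ⟨⟨⟨a, b⟩, hab⟩, hp⟩ := Function.ne_iff.1 hp
    simp only at hab
    simp only [Pi.zero_apply] at hp
    have e1 : eval p (altP K σ a b) = p ⟨(a, b), hab⟩ := by simp [altP, hab]
    have e2 : eval p (altP K σ b a) = - p ⟨(a, b), hab⟩ := by simp [altP, hab, hab.not_gt]
    have e3 : ∀ s, eval p (altP K σ s s) = 0 := by intro s; simp [altP]
    refine ⟨fun s => eval p (altP K σ s b), fun s => eval p (altP K σ s a), ?_, ?_⟩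
    · rw [LinearIndependent.pair_iff]
      intro s t hst
      have ha := congrFun hst a
      have hb := congrFun hst b
      simp only [Pi.add_apply, Pi.smul_apply, smul_eq_mul, Pi.zero_apply, e1, e2, e3, mul_zero,
        add_zero, zero_add] at ha hb
      simp [hp] at ha hb
      exact ⟨ha, hb⟩
    · intro i s t
      rw [← h i (fun c => (if c = b then s else 0) + (if c = a then t else 0))]
      congr 2
      ext c
      simp [add_mul, Finset.sum_add_distrib]

theorem LS_closed [IsAlgClosed K] [τ : TopologicalSpace (Tup K σ J d)]
    (hτ : τ = zariskiTopology K (Tup K σ J d)) : IsClosed (LS K σ J d) := by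
  rw [← closure_subset_iff_isClosed]
  intro F0 hF0
  by_contra hc
  rw [zar_mem_closure hτ (Tb K σ J d)] at hF0
  let Λ : J × (σ → K) → Tup K σ J d →ₗ[K] MvPolynomial {q : σ × σ // q.1 < q.2} K := fun α =>
    ((aeval (R := K) (fun s => ∑ t, C (α.2 t) * altP K σ s t)).toLinearMap.comp
      (homogeneousSubmodule σ K d).subtype).comp (LinearMap.proj (R := K) α.1 : Tup K σ J d →ₗ[K] _)
  have hΛ : ∀ α F p, eval p (Λ α F) = eval (fun s => ∑ t, α.2 t * eval p (altP K σ s t))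
      (F α.1 : MvPolynomial σ K) := by
    intro α F p
    change eval p (aeval _ _) = _
    rw [eval_aeval_aux]
    congr 2
    ext s
    simp
  have hhom : ∀ α F, (Λ α F).IsHomogeneous d := by
    intro α F
    have := (F α.1).2.aeval (fun s => ∑ t, C (α.2 t) * altP K σ s t) (n := 1) (fun s =>
      IsHomogeneous.sum _ _ _ fun t _ => by
        apply IsHomogeneous.C_mul
        unfold altP
        split_ifs
        · exact isHomogeneous_X _ _
        · exact (isHomogeneous_X _ _).neg
        · exact isHomogeneous_zero _ _ _)
    rwa [one_mul] at this
  obtain ⟨f, hf, hf0, hfF⟩ := elim_aux Λ d hhom F0 (by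
    intro p hp
    by_contra hp0
    exact hc ((LS_iff F0).2 ⟨p, hp0, fun i ξ => by rw [← hp (i, ξ), hΛ]⟩))
  obtain ⟨q, rfl⟩ := (PF_iff_basis (Tb K σ J d)).1 hf
  apply hf0
  apply hF0
  intro F hF
  by_contra hF'
  obtain ⟨p, hp, hpF⟩ := (LS_iff F).1 hF
  exact hp (hfF F hF' p fun α => by rw [hΛ, hpF])

end Closed
end Lines

noncomputable section LinesTwo

variable {K : Type*} [Field K] {σ : Type*} [Fintype σ] [DecidableEq σ] {d : ℕ} {J : Type*} [Fintype J]

theorem pair_single {a b : σ} (hab : a ≠ b) :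
    LinearIndependent K ![(Pi.single a 1 : σ → K), Pi.single b 1] := by
  rw [LinearIndependent.pair_iff]
  intro s t h
  have h1 := congrFun h a
  have h2 := congrFun h b
  simp [hab, hab.symm] at h1 h2
  exact ⟨h1, h2⟩

theorem exists_equiv_pair {a b : σ} (hab : a ≠ b) {v w : σ → K} (h : LinearIndependent K ![v, w]) :
    ∃ E : (σ → K) ≃ₗ[K] (σ → K), E (Pi.single a 1) = v ∧ E (Pi.single b 1) = w := by
  have hD := pair_single (K := K) hab
  have q0 {v w : σ → K} (h : LinearIndependent K ![v, w]) :
    h.linearCombinationEquiv (Finsupp.single 0 1) = v := by simp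
  have q1 {v w : σ → K} (h : LinearIndependent K ![v, w]) :
    h.linearCombinationEquiv (Finsupp.single 1 1) = w := by simp
  let f := hD.linearCombinationEquiv.symm ≪≫ₗ h.linearCombinationEquiv
  have : FiniteDimensional K (Submodule.span K (Set.range ![(Pi.single a 1 : σ → K), Pi.single b 1])) :=
    inferInstance
  obtain ⟨g, hg⟩ := Submodule.exists_linearEquiv_restrict_eq f
  refine ⟨g, ?_, ?_⟩
  · conv_lhs => rw [← q0 hD]
    rw [← hg]
    simp [f]
  · conv_lhs => rw [← q1 hD]
    rw [← hg]
    simp [f]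

theorem LS_prime [Infinite K] {a b : σ} (hab : a ≠ b) :
    (IV (Tb K σ J d) (LS K σ J d)).IsPrime := by
  let πv : (σ → K) → σ → K := fun y => y a • Pi.single a 1 + y b • Pi.single b 1
  let πm : Matrix σ σ K := Matrix.diagonal fun s => if s = a ∨ s = b then 1 else 0
  have hπ : ∀ y, πm.mulVec y = πv y := by
    intro y
    ext s
    simp only [πm, πv, Matrix.mulVec_diagonal, Pi.add_apply, Pi.smul_apply, smul_eq_mul,
      Pi.single_apply]
    by_cases h1 : s = a
    · subst h1; simp [hab]
    · by_cases h2 : s = b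
      · subst h2; simp [h1]
      · simp [h1, h2]
  let A : ((σ × σ) ⊕ (J × Mon σ d) → K) → Matrix σ σ K := fun u => Matrix.of fun s t => u (.inl (s, t))
  let Q : ((σ × σ) ⊕ (J × Mon σ d) → K) → J → MvPolynomial σ K := fun u i =>
    ∑ m : Mon σ d, monomial m.1 (u (.inr (i, m)))
  have hQ : ∀ u i, (Q u i).IsHomogeneous d := fun u i =>
    IsHomogeneous.sum _ _ _ fun m _ => isHomogeneous_monomial _ m.2
  let Φ : ((σ × σ) ⊕ (J × Mon σ d) → K) → Tup K σ J d := fun u i =>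
    ⟨lsub (A u) (Q u i - lsub πm (Q u i)), homog_lsub _ ((hQ u i).sub (homog_lsub _ (hQ u i)))⟩
  have hΦ : ∀ u i x, eval x (Φ u i : MvPolynomial σ K) =
      eval ((A u).mulVec x) (Q u i) - eval (πv ((A u).mulVec x)) (Q u i) := by
    intro u i x
    simp only [Φ]
    rw [eval_lsub, map_sub, eval_lsub, hπ]
  have hA : ∀ x s, (fun u => (A u).mulVec x s) ∈ PF K _ := by
    intro x s
    exact PF_sum _ fun t _ => PF_mul (PF_coord _) (PF_const _)
  have hQe : ∀ (y : ((σ × σ) ⊕ (J × Mon σ d) → K) → σ → K),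
      (∀ s, (fun u => y u s) ∈ PF K _) → ∀ i, (fun u => eval (y u) (Q u i)) ∈ PF K _ := by
    intro y hy i
    have : (fun u => eval (y u) (Q u i)) = fun u => ∑ m : Mon σ d, u (.inr (i, m)) *
        eval (y u) (monomial m.1 1) := by
      ext u
      simp [Q, eval_monomial]
    rw [this]
    exact PF_sum _ fun m _ => PF_mul (PF_coord _) (PF_eval hy _)
  have hΦPF : ∀ i x, (fun u => eval x (Φ u i : MvPolynomial σ K)) ∈ PF K _ := by
    intro i x
    simp only [hΦ]
    refine PF_sub (hQe _ (hA x) i) (hQe _ (fun s => ?_) i)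
    exact PF_add (PF_mul (hA x a) (PF_const _)) (PF_mul (hA x b) (PF_const _))
  have hmem : ∀ u, (A u).det ≠ 0 → Φ u ∈ LS K σ J d := by
    intro u hu
    have hu' : IsUnit (A u).det := isUnit_iff_ne_zero.2 hu
    have hinv : ∀ y, (A u).mulVec ((A u)⁻¹.mulVec y) = y := by
      intro y
      rw [Matrix.mulVec_mulVec, Matrix.mul_nonsing_inv _ hu', Matrix.one_mulVec]
    refine ⟨(A u)⁻¹.mulVec (Pi.single a 1), (A u)⁻¹.mulVec (Pi.single b 1), ?_, ?_⟩
    · have h0 := pair_single (K := K) hab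
      rw [LinearIndependent.pair_iff] at h0 ⊢
      intro s t hst
      apply h0
      have := congrArg (A u).mulVec hst
      rwa [Matrix.mulVec_add, Matrix.mulVec_smul, Matrix.mulVec_smul, hinv, hinv,
        Matrix.mulVec_zero] at this
    · intro i s t
      rw [hΦ]
      have : (fun j => s * (A u)⁻¹.mulVec (Pi.single a 1) j + t * (A u)⁻¹.mulVec (Pi.single b 1) j)
          = s • (A u)⁻¹.mulVec (Pi.single a 1) + t • (A u)⁻¹.mulVec (Pi.single b 1) := rfl
      rw [this, Matrix.mulVec_add, Matrix.mulVec_smul, Matrix.mulVec_smul, hinv, hinv]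
      have : πv (s • Pi.single a 1 + t • Pi.single b 1) = s • Pi.single a 1 + t • Pi.single b 1 := by
        simp [πv, hab, hab.symm]
      rw [this, sub_self]
  have hsurj : ∀ F ∈ LS K σ J d, ∃ u, Φ u = F := by
    rintro F ⟨v, w, hli, h⟩
    obtain ⟨E, rfl, rfl⟩ := exists_equiv_pair hab hli
    set Bm := LinearMap.toMatrix' (E : (σ → K) →ₗ[K] (σ → K)) with hBm
    refine ⟨Sum.elim (fun q => LinearMap.toMatrix' (E.symm : (σ → K) →ₗ[K] (σ → K)) q.1 q.2)
      (fun q => coeff q.2.1 (lsub Bm (F q.1))), ?_⟩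
    set u : (σ × σ) ⊕ (J × Mon σ d) → K := Sum.elim (fun q => LinearMap.toMatrix' (E.symm : (σ → K) →ₗ[K] (σ → K)) q.1 q.2)
      (fun q => coeff q.2.1 (lsub Bm (F q.1))) with hu
    have hQu : ∀ i, Q u i = lsub Bm (F i) := by
      intro i
      simp only [Q, hu, Sum.elim_inr]
      exact (homog_sum (homog_lsub Bm (F i).2)).symm
    have hAu : ∀ x, (A u).mulVec x = E.symm x := by
      intro x
      have : A u = LinearMap.toMatrix' (E.symm : (σ → K) →ₗ[K] (σ → K)) := by
        ext s t; rfl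
      rw [this, LinearMap.toMatrix'_mulVec]
      rfl
    have hB : ∀ x, Bm.mulVec x = E x := fun x => LinearMap.toMatrix'_mulVec _ _
    ext1 i
    apply Subtype.ext
    apply MvPolynomial.funext
    intro x
    rw [hΦ, hQu, eval_lsub, eval_lsub, hAu, hB, hB, LinearEquiv.apply_symm_apply]
    have : eval (E (πv (E.symm x))) (F i : MvPolynomial σ K) = 0 := by
      rw [← h i (E.symm x a) (E.symm x b)]
      congr 2
      simp only [πv, map_add, map_smul]
      rfl
    rw [this, sub_zero]
  constructor
  · intro ht
    have h0 : (0 : Tup K σ J d) ∈ LS K σ J d := ⟨_, _, pair_single hab, fun i s t => by simp⟩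
    have := (Ideal.eq_top_iff_one _).1 ht 0 h0
    simp at this
  · intro p q hpq
    have hcomp : ∀ p : MvPolynomial _ K, ∃ P : MvPolynomial ((σ × σ) ⊕ (J × Mon σ d)) K, ∀ u,
        eval ((Tb K σ J d).repr (Φ u)) p = eval u P := by
      intro p
      have := PF_comp_tup (K := K) hΦPF ((PF_iff_basis (Tb K σ J d)).2 ⟨p, rfl⟩)
      obtain ⟨P, hP⟩ := PF_iff.1 this
      exact ⟨P, fun u => congrFun hP u⟩
    obtain ⟨P, hP⟩ := hcomp p
    obtain ⟨R, hR⟩ := hcomp q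
    have hdet : (fun u => (A u).det) ∈ PF K ((σ × σ) ⊕ (J × Mon σ d) → K) :=
      PF_det fun i j => PF_coord _
    obtain ⟨δ, hδ⟩ := PF_iff.1 hdet
    have hδ0 : δ ≠ 0 := by
      rintro rfl
      have := congrFun hδ (Sum.elim (fun q => (1 : Matrix σ σ K) q.1 q.2) 0)
      have h1 : A (Sum.elim (fun q => (1 : Matrix σ σ K) q.1 q.2) 0) = 1 := by
        ext s t; rfl
      simp [h1] at this
    have hprod : P * R * δ = 0 := by
      apply MvPolynomial.funext
      intro u
      rw [map_mul, map_mul, map_zero, ← hP, ← hR, ← congrFun hδ u]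
      by_cases hu : (A u).det = 0
      · rw [hu, mul_zero]
      · have := hpq _ (hmem u hu)
        rw [map_mul] at this
        rw [this, zero_mul]
    rcases mul_eq_zero.1 hprod with h | h
    · rcases mul_eq_zero.1 h with h | h
      · left
        intro F hF
        obtain ⟨u, rfl⟩ := hsurj F hF
        rw [hP, h, map_zero]
      · right
        intro F hF
        obtain ⟨u, rfl⟩ := hsurj F hF
        rw [hR, h, map_zero]
    · exact (hδ0 h).elim

theorem LS_dim [Infinite K] {a b : σ} (hab : a ≠ b) (F : Tup K σ J d) (hF : F ∈ LS K σ J d) :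
    (2 : WithBot ℕ∞) ≤ ringKrullDim (MvPolynomial σ K ⧸ Ideal.span (Set.range fun i => (F i : MvPolynomial σ K))) := by
  obtain ⟨v, w, hli, h⟩ := hF
  obtain ⟨E, hv, hw⟩ := exists_equiv_pair hab hli
  let φ : MvPolynomial σ K →ₐ[K] MvPolynomial (Fin 2) K := aeval fun s => C (v s) * X 0 + C (w s) * X 1
  have hφ : ∀ G x, eval x (φ G) = eval (fun s => x 0 * v s + x 1 * w s) G := by
    intro G x
    rw [eval_aeval_aux]
    congr 2
    ext s
    simp [mul_comm]
  have hker : ∀ p ∈ Ideal.span (Set.range fun i => (F i : MvPolynomial σ K)), φ.toRingHom p = 0 := by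
    intro p hp
    have : Ideal.span (Set.range fun i => (F i : MvPolynomial σ K)) ≤ RingHom.ker φ.toRingHom := by
      rw [Ideal.span_le]
      rintro _ ⟨i, rfl⟩
      change φ _ = 0
      apply MvPolynomial.funext
      intro x
      rw [hφ, h, map_zero]
    exact this hp
  have hlin : ∀ (c : σ) , φ (∑ s, C (E.symm (Pi.single s 1) c) * X s) =
      C (E.symm v c) * X 0 + C (E.symm w c) * X 1 := by
    intro c
    apply MvPolynomial.funext
    intro x
    rw [hφ]
    have hexp : ∀ y : σ → K, E.symm y c = ∑ s, E.symm (Pi.single s 1) c * y s := by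
      intro y
      conv_lhs => rw [← Finset.univ_sum_single y, map_sum, Finset.sum_apply]
      refine Finset.sum_congr rfl fun j _ => ?_
      have : (Pi.single j (y j) : σ → K) = y j • Pi.single j 1 := by
        rw [← Pi.single_smul, smul_eq_mul, mul_one]
      rw [this, map_smul, Pi.smul_apply, smul_eq_mul, mul_comm]
    simp only [map_sum, map_mul, map_add, eval_C, eval_X]
    rw [hexp v, hexp w, Finset.sum_mul, Finset.sum_mul, ← Finset.sum_add_distrib]
    exact Finset.sum_congr rfl fun s _ => by ring
  have hsurj : Function.Surjective φ := by
    rw [← AlgHom.range_eq_top, ← top_le_iff, ← MvPolynomial.adjoin_range_X, Algebra.adjoin_le_iff]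
    rintro _ ⟨i, rfl⟩
    fin_cases i
    · exact ⟨_, (hlin a).trans (by
        rw [← hv, ← hw, LinearEquiv.symm_apply_apply, LinearEquiv.symm_apply_apply]
        simp [hab, hab.symm])⟩
    · exact ⟨_, (hlin b).trans (by
        rw [← hv, ← hw, LinearEquiv.symm_apply_apply, LinearEquiv.symm_apply_apply]
        simp [hab, hab.symm])⟩
  have hs2 : Function.Surjective (Ideal.Quotient.lift _ φ.toRingHom hker) :=
    Ideal.Quotient.lift_surjective_of_surjective _ hker hsurj
  have := ringKrullDim_le_of_surjective _ hs2
  refine le_trans ?_ this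
  rw [MvPolynomial.ringKrullDim_of_isNoetherianRing, ringKrullDim_eq_zero_of_field]
  simp

end LinesTwo

noncomputable section LowerBound

variable {K : Type*} [Field K]

theorem tinj {A : Type*} [CommRing A] [IsDomain A] (ψ : A →+* Polynomial A)
    (hψ : ∀ a, (ψ a).coeff 0 = a) (p : Polynomial A)
    (hp : Polynomial.eval₂RingHom ψ Polynomial.X p = 0) : p = 0 := by
  have h0 : ∀ p : Polynomial A, (Polynomial.eval₂RingHom ψ Polynomial.X p).coeff 0 = p.coeff 0 := by
    intro p
    induction p using Polynomial.induction_on' with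
    | add p q hp hq => rw [map_add, Polynomial.coeff_add, hp, hq, Polynomial.coeff_add]
    | monomial n a =>
      rw [Polynomial.coe_eval₂RingHom, Polynomial.eval₂_monomial, Polynomial.mul_coeff_zero, hψ,
        Polynomial.coeff_X_pow, Polynomial.coeff_monomial]
      by_cases h : n = 0
      · subst h; simp
      · simp [h, Ne.symm h]
  induction hn : p.natDegree using Nat.strong_induction_on generalizing p with
  | _ n ih =>
    have hc : p.coeff 0 = 0 := by rw [← h0, hp, Polynomial.coeff_zero]
    have hX := Polynomial.divX_mul_X_add p
    rw [hc, Polynomial.C_0, add_zero] at hX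
    have hd : p.divX = 0 := by
      by_cases hn0 : n = 0
      · have : p = Polynomial.C (p.coeff 0) := Polynomial.eq_C_of_natDegree_eq_zero (by omega)
        rw [this, Polynomial.divX_C]
      · refine ih p.divX.natDegree ?_ p.divX ?_ rfl
        · rw [Polynomial.natDegree_divX_eq_natDegree_tsub_one]; omega
        · rw [← hX, map_mul] at hp
          simp only [Polynomial.coe_eval₂RingHom, Polynomial.eval₂_X] at hp
          exact (mul_eq_zero.1 hp).resolve_right Polynomial.X_ne_zero
    rw [← hX, hd, zero_mul]

theorem dens [Infinite K] {T₁ T₂ : Type*} [Fintype T₁]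
    (w : T₂ → T₁ → MvPolynomial T₂ K) (q₀ : T₁ → K)
    (h0 : ∀ s, ∑ m, C (q₀ m) * w s m = X s) :
    ZD {z : T₁ ⊕ T₂ → K | ∃ q y, z = Sum.elim q (fun s => ∑ m, q m * eval y (w s m))} := by
  intro g hg
  by_contra hg0
  obtain ⟨z, -, hz⟩ := (ZD.univ (K := K)).ne hg0
  set u : T₁ → K := fun s => z (.inl s) - q₀ s with hu
  let G : Polynomial (MvPolynomial T₂ K) := aeval (R := K) (Sum.elim
    (fun s => Polynomial.C (C (q₀ s)) + Polynomial.X * Polynomial.C (C (u s)))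
    (fun s => Polynomial.C (X s))) g
  let ev : K → (T₂ → K) → Polynomial (MvPolynomial T₂ K) →+* K := fun t y =>
    Polynomial.eval₂RingHom (eval y) t
  have hev : ∀ t y, ev t y G = eval (Sum.elim (fun s => q₀ s + t * u s) y) g := by
    intro t y
    simp only [G]
    rw [aeval_def, hom_eval₂]
    change _ = eval₂ _ _ g
    congr 1
    · ext c
      simp [ev, Polynomial.algebraMap_apply, algebraMap_eq]
    · ext s
      rcases s with s | s
      · simp [ev]
        ring
      · simp [ev]
  have hG : G ≠ 0 := by
    intro h
    apply hz
    have := hev 1 (fun s => z (.inr s))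
    rw [h, map_zero] at this
    rw [this]
    congr 2
    ext s
    rcases s with s | s <;> simp [hu]
  let ψ : MvPolynomial T₂ K →+* Polynomial (MvPolynomial T₂ K) := (aeval (R := K) fun s =>
    Polynomial.C (X s) + Polynomial.X * Polynomial.C (∑ m, C (u m) * w s m)).toRingHom
  have hψ : ∀ a, (ψ a).coeff 0 = a := by
    intro a
    induction a using MvPolynomial.induction_on with
    | C c => simp [ψ, Polynomial.algebraMap_apply, algebraMap_eq]
    | add p q hp hq => rw [map_add, Polynomial.coeff_add, hp, hq]
    | mul_X p s hp =>
      rw [map_mul, Polynomial.mul_coeff_zero, hp]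
      simp [ψ]
  apply hG
  apply tinj ψ hψ
  -- vanishing by evaluation
  have hev2 : ∀ t y, ev t y (Polynomial.eval₂RingHom ψ Polynomial.X G) = 0 := by
    intro t y
    set y' : T₂ → K := fun s => y s + t * ∑ m, u m * eval y (w s m) with hy'
    have hcomp : ∀ P, ev t y (Polynomial.eval₂RingHom ψ Polynomial.X P) = ev t y' P := by
      intro P
      have : (ev t y).comp (Polynomial.eval₂RingHom ψ Polynomial.X) = ev t y' := by
        apply Polynomial.ringHom_ext'
        · apply MvPolynomial.ringHom_ext
          · intro c
            simp [ev, ψ, Polynomial.algebraMap_apply, algebraMap_eq]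
          · intro s
            simp [ev, ψ, hy', Polynomial.eval₂_finsetSum]
        · simp [ev]
      rw [← this]; rfl
    rw [hcomp, hev]
    refine hg _ ⟨fun s => q₀ s + t * u s, y, ?_⟩
    congr 1
    ext s
    have := congrArg (eval y) (h0 s)
    simp only [map_sum, map_mul, eval_C, eval_X] at this
    simp only [hy', add_mul, Finset.sum_add_distrib]
    rw [this, Finset.mul_sum]
    simp only [mul_assoc]
  generalize Polynomial.eval₂RingHom ψ Polynomial.X G = P at hev2
  ext1 n
  apply MvPolynomial.funext
  intro y
  have : P.map (eval y) = 0 := by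
    apply Polynomial.funext
    intro t
    rw [Polynomial.eval_map]
    simpa [ev] using hev2 t y
  have := congrArg (fun q => Polynomial.coeff q n) this
  simpa using this

variable {k d : ℕ}

/-- nonpure monomials -/
abbrev NP (k d : ℕ) : Type := {m : Mon (Fin (k + 2)) d // ∃ j : Fin k, m.1 j.succ.succ ≠ 0}

theorem card_NP (k d : ℕ) : Nat.card (Mon (Fin (k + 2)) d) ≤ Nat.card (NP k d) + (d + 1) := by
  classical
  have h1 : Nat.card (Mon (Fin (k + 2)) d) = Nat.card (NP k d) +
      Nat.card {m : Mon (Fin (k + 2)) d // ¬ ∃ j : Fin k, m.1 j.succ.succ ≠ 0} := by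
    rw [← Nat.card_sum]
    exact Nat.card_congr (Equiv.sumCompl _).symm
  rw [h1]
  gcongr
  have hdeg : ∀ m : {m : Mon (Fin (k + 2)) d // ¬ ∃ j : Fin k, m.1 j.succ.succ ≠ 0},
      m.1.1 0 + m.1.1 1 = d := by
    rintro ⟨⟨m, hm⟩, h⟩
    push Not at h
    simp only at h ⊢
    rw [← hm, Finsupp.degree_eq_sum, Fin.sum_univ_succ, Fin.sum_univ_succ]
    simp [h]
  let φ : {m : Mon (Fin (k + 2)) d // ¬ ∃ j : Fin k, m.1 j.succ.succ ≠ 0} → Fin (d + 1) :=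
    fun m => ⟨m.1.1 0, by have := hdeg m; omega⟩
  have hφ : Function.Injective φ := by
    intro m n hmn
    have h0 : m.1.1 0 = n.1.1 0 := congrArg Fin.val hmn
    have h1 := hdeg m
    have h2 := hdeg n
    apply Subtype.ext
    apply Subtype.ext
    ext s
    refine Fin.cases h0 (fun s => ?_) s
    refine Fin.cases ?_ (fun j => ?_) s
    · change m.1.1 1 = n.1.1 1
      omega
    · have hm := m.2
      have hn := n.2
      push Not at hm hn
      rw [hm, hn]
  have := Nat.card_le_card_of_injective φ hφ
  simpa using this

theorem LS_lower [IsAlgClosed K] (hd : 1 ≤ d) [τ : TopologicalSpace (Tup K (Fin (k + 2)) (Fin (k + 1)) d)]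
    (hτ : τ = zariskiTopology K _) (hk : 1 ≤ k) :
    (((k + 1) * Nat.card (NP k d) + 2 * k : ℕ) : WithBot ℕ∞) ≤
      dimSet (LS K (Fin (k + 2)) (Fin (k + 1)) d) := by
  classical
  have : Fintype (NP k d) := Fintype.ofFinite _
  let T := (Fin (k + 1) × NP k d) ⊕ (Fin k × Fin 2)
  let pt : Fin 2 → Fin (k + 2) → K := fun ε => Fin.cons 1 (Fin.cons (if ε = 0 then 0 else 1) 0)
  let Pt : Fin 2 → Fin (k + 2) → MvPolynomial (Fin k × Fin 2) K := fun ε =>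
    Fin.cons 1 (Fin.cons (if ε = 0 then 0 else 1) fun j => X (j, ε))
  let rv : (Fin k × Fin 2 → K) → (Fin (k + 2) → K) → Fin (k + 2) → K := fun y x =>
    Fin.cons (x 0) (Fin.cons (x 1) fun j => y (j, 0) * (x 0 - x 1) + y (j, 1) * x 1)
  let rs : (Fin k × Fin 2 → K) → Fin (k + 2) → MvPolynomial (Fin (k + 2)) K := fun y =>
    Fin.cons (X 0) (Fin.cons (X 1) fun j => C (y (j, 0)) * (X 0 - X 1) + C (y (j, 1)) * X 1)
  have hrs : ∀ y x G, eval x (aeval (R := K) (rs y) G) = eval (rv y x) G := by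
    intro y x G
    rw [eval_aeval_aux]
    congr 2
    ext s
    refine Fin.cases ?_ (fun s => ?_) s
    · simp [rs, rv]
    · refine Fin.cases ?_ (fun j => ?_) s
      · simp [rs, rv]
      · simp [rs, rv]
  have hrv : ∀ y x, rv y (rv y x) = rv y x := by
    intro y x
    have h0 : rv y x 0 = x 0 := rfl
    have h1 : rv y x 1 = x 1 := rfl
    rfl
  have hpt : ∀ y ε, rv y (pt ε) = fun s => eval y (Pt ε s) := by
    intro y ε
    ext s
    refine Fin.cases ?_ (fun s => ?_) s
    · simp [rv, pt, Pt]
    · refine Fin.cases ?_ (fun j => ?_) s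
      · change pt ε 1 = _
        simp only [pt, Pt]
        fin_cases ε <;> simp <;> rfl
      · have h0 : pt ε 0 = 1 := rfl
        have h1 : pt ε 1 = if ε = 0 then 0 else 1 := rfl
        simp [rv, Pt, h0, h1]
        fin_cases ε <;> simp
  let Q : (Fin (k + 1) × NP k d → K) → Fin (k + 1) → MvPolynomial (Fin (k + 2)) K := fun q i =>
    ∑ m : NP k d, monomial m.1.1 (q (i, m))
  have hQ : ∀ q i, (Q q i).IsHomogeneous d := fun u i =>
    IsHomogeneous.sum _ _ _ fun m _ => isHomogeneous_monomial _ m.1.2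
  have hQpt : ∀ q i ε, eval (pt ε) (Q q i) = 0 := by
    intro q i ε
    simp only [Q, map_sum]
    refine Finset.sum_eq_zero fun m _ => ?_
    obtain ⟨j, hj⟩ := m.2
    rw [eval_monomial, Finsupp.prod_fintype _ _ (by simp)]
    rw [Finset.prod_eq_zero (Finset.mem_univ j.succ.succ), mul_zero]
    have : pt ε j.succ.succ = 0 := rfl
    rw [this, zero_pow hj]
  have hhom : ∀ y q i, (aeval (R := K) (rs y) (Q q i)).IsHomogeneous d := by
    intro y q i
    have := (hQ q i).aeval (rs y) (n := 1) (fun s => by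
      refine Fin.cases ?_ (fun s => ?_) s
      · exact isHomogeneous_X _ _
      · refine Fin.cases ?_ (fun j => ?_) s
        · exact isHomogeneous_X _ _
        · simp only [rs, Fin.cons_succ]
          exact (((isHomogeneous_X _ _).sub (isHomogeneous_X _ _)).C_mul _).add
            ((isHomogeneous_X _ _).C_mul _))
    rwa [one_mul] at this
  let Λ : (Fin (k + 1) × NP k d → K) → (Fin k × Fin 2 → K) → Tup K (Fin (k + 2)) (Fin (k + 1)) d :=
    fun q y i => ⟨Q q i - aeval (R := K) (rs y) (Q q i), (hQ q i).sub (hhom y q i)⟩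
  have hΛmem : ∀ q y, Λ q y ∈ LS K (Fin (k + 2)) (Fin (k + 1)) d := by
    intro q y
    refine ⟨rv y (Pi.single 0 1), rv y (Pi.single 1 1), ?_, ?_⟩
    · rw [LinearIndependent.pair_iff]
      intro s t hst
      have h0 := congrFun hst 0
      have h1 := congrFun hst 1
      change s * (Pi.single 0 1 : Fin (k + 2) → K) 0 + t * (Pi.single 1 1 : Fin (k + 2) → K) 0 = 0 at h0
      change s * (Pi.single 0 1 : Fin (k + 2) → K) 1 + t * (Pi.single 1 1 : Fin (k + 2) → K) 1 = 0 at h1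
      simp at h0 h1
      exact ⟨h0, h1⟩
    · intro i s t
      have : (fun j => s * rv y (Pi.single 0 1) j + t * rv y (Pi.single 1 1) j) =
          rv y (fun j => s * (Pi.single 0 1 : Fin (k + 2) → K) j + t * (Pi.single 1 1 : Fin (k + 2) → K) j) := by
        ext c
        refine Fin.cases rfl (fun c => ?_) c
        refine Fin.cases rfl (fun j => ?_) c
        simp [rv]
        ring
      rw [this]
      simp only [Λ, map_sub, hrs, hrv, sub_self]
  have hcoef : ∀ q y i (m : NP k d), coeff m.1.1 (Λ q y i : MvPolynomial (Fin (k + 2)) K) = q (i, m) := by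
    intro q y i m
    have h1 : coeff m.1.1 (aeval (R := K) (rs y) (Q q i)) = 0 := by
      by_contra hc
      have hs : aeval (R := K) (rs y) (Q q i) ∈ supported K ({0, 1} : Set (Fin (k + 2))) := by
        have : (aeval (R := K) (rs y)).range ≤ supported K ({0, 1} : Set (Fin (k + 2))) := by
          rw [← Algebra.adjoin_range_eq_range_aeval, Algebra.adjoin_le_iff]
          have hX0 : (X 0 : MvPolynomial (Fin (k + 2)) K) ∈ supported K ({0, 1} : Set (Fin (k + 2))) := by
            rw [X_mem_supported]; simp
          have hX1 : (X 1 : MvPolynomial (Fin (k + 2)) K) ∈ supported K ({0, 1} : Set (Fin (k + 2))) := by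
            rw [X_mem_supported]; simp
          have hC : ∀ c, (C c : MvPolynomial (Fin (k + 2)) K) ∈ supported K ({0, 1} : Set (Fin (k + 2))) :=
            fun c => (supported K _).algebraMap_mem c
          rintro _ ⟨s, rfl⟩
          refine Fin.cases hX0 (fun s => ?_) s
          refine Fin.cases hX1 (fun j => ?_) s
          simp only [rs, Fin.cons_succ]
          exact add_mem (mul_mem (hC _) (sub_mem hX0 hX1)) (mul_mem (hC _) hX1)
        exact this ⟨_, rfl⟩
      rw [mem_supported] at hs
      obtain ⟨j, hj⟩ := m.2
      have hv : j.succ.succ ∈ (aeval (R := K) (rs y) (Q q i)).vars :=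
        (mem_vars_iff_mem_support _).2 ⟨m.1.1, mem_support_iff.2 hc, Finsupp.mem_support_iff.2 hj⟩
      have := hs hv
      simp [Fin.ext_iff] at this
    simp only [Λ, coeff_sub, h1, sub_zero, Q, coeff_sum, coeff_monomial]
    rw [Finset.sum_eq_single m]
    · simp
    · intro n _ hn
      rw [if_neg]
      intro h
      exact hn (Subtype.ext (Subtype.ext h))
    · simp
  let f : T → Tup K (Fin (k + 2)) (Fin (k + 1)) d → K := Sum.elim
    (fun s F => coeff s.2.1.1 (F s.1 : MvPolynomial (Fin (k + 2)) K))
    (fun s F => - eval (pt s.2) (F s.1.castSucc : MvPolynomial (Fin (k + 2)) K))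
  have hf : ∀ t, f t ∈ PF K _ := by
    rintro (t | t)
    · exact PF_tup_coeff _ _
    · exact PF_neg (PF_tup_eval _ _)
  let w : Fin k × Fin 2 → Fin (k + 1) × NP k d → MvPolynomial (Fin k × Fin 2) K := fun s m =>
    if m.1 = s.1.castSucc then aeval (R := K) (Pt s.2) (monomial m.2.1.1 (1 : K)) else 0
  let m0 : Fin k → (Fin (k + 2) →₀ ℕ) := fun i =>
    Finsupp.single 0 (d - 1) + Finsupp.single i.succ.succ 1
  let q0 : Fin (k + 1) × NP k d → K := fun m =>
    if ∃ i : Fin k, m.1 = i.castSucc ∧ m.2.1.1 = m0 i then 1 else 0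
  have hden := dens w q0 (by
    rintro ⟨i, ε⟩
    have hm0 : (m0 i).degree = d := by
      simp only [m0, map_add, Finsupp.degree_single]
      omega
    have hne : m0 i i.succ.succ ≠ 0 := by
      simp [m0]
    rw [Finset.sum_eq_single (i.castSucc, ⟨⟨m0 i, hm0⟩, i, hne⟩)]
    · have h1 : q0 (i.castSucc, ⟨⟨m0 i, hm0⟩, i, hne⟩) = 1 := if_pos ⟨i, rfl, rfl⟩
      rw [h1, C_1, one_mul]
      simp only [w, if_true]
      have : monomial (m0 i) (1 : K) = X 0 ^ (d - 1) * X i.succ.succ := by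
        rw [X_pow_eq_monomial, X, monomial_mul, one_mul]
      rw [this, map_mul, map_pow, aeval_X, aeval_X]
      simp [Pt]
    · rintro ⟨i', m⟩ _ hm
      simp only [w, q0]
      by_cases h1 : i' = i.castSucc
      · rw [if_neg, C_0, zero_mul]
        rintro ⟨j, hj1, hj2⟩
        have : i = j := Fin.castSucc_injective _ (h1.symm.trans hj1)
        subst this
        apply hm
        rw [Prod.mk.injEq]
        exact ⟨h1, Subtype.ext (Subtype.ext hj2)⟩
      · rw [if_neg h1, mul_zero]
    · simp)
  have hZD : ZD {z | ∃ F ∈ LS K (Fin (k + 2)) (Fin (k + 1)) d, z = fun t => f t F} := by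
    refine hden.mono ?_
    rintro _ ⟨q, y, rfl⟩
    refine ⟨Λ q y, hΛmem q y, ?_⟩
    ext t
    rcases t with ⟨i, m⟩ | ⟨i, ε⟩
    · simp only [f, Sum.elim_inl]
      rw [hcoef]
    · simp only [f, Sum.elim_inr, w]
      simp only [Λ]
      rw [map_sub, hQpt, zero_sub, neg_neg, hrs, hpt, Fintype.sum_prod_type,
        Finset.sum_eq_single i.castSucc]
      · simp only [Q, map_sum, if_true]
        refine Finset.sum_congr rfl fun m _ => ?_
        rw [eval_aeval_aux]
        simp [eval_monomial]
      · intro i' _ hi'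
        simp [hi']
      · simp
  have hirr : IsIrreducible (LS K (Fin (k + 2)) (Fin (k + 1)) d) :=
    zar_irred_of hτ (Tb K _ _ d) (LS_prime (a := 0) (b := 1) (by simp))
  have := zar_lower hτ (Tb K _ _ d) hirr hf hZD
  refine le_trans (le_of_eq ?_) this
  congr 1
  simp only [T, Fintype.card_sum, Fintype.card_prod, Fintype.card_fin, Nat.card_eq_fintype_card]
  ring

end LowerBound

noncomputable section Fibers

variable {K : Type*} [Field K] {σ : Type*} [Fintype σ] {d : ℕ}

theorem ZD.comp_inj {T T' : Type*} {D : Set (T → K)} (h : ZD D) {φ : T' → T}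
    (hφ : Function.Injective φ) : ZD ((fun z : T → K => z ∘ φ) '' D) := by
  intro g hg
  apply rename_injective φ hφ
  rw [map_zero]
  apply h
  intro x hx
  rw [eval_rename]
  exact hg _ ⟨x, hx, rfl⟩

/-- irreducible set of points -/
def IrrX (X : Set (σ → K)) : Prop :=
  X.Nonempty ∧ ∀ p q : MvPolynomial σ K, (∀ x ∈ X, eval x (p * q) = 0) →
    (∀ x ∈ X, eval x p = 0) ∨ (∀ x ∈ X, eval x q = 0)

theorem IrrX.exists_mul {X : Set (σ → K)} (hX : IrrX X) {p q : MvPolynomial σ K}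
    (hp : ∃ x ∈ X, eval x p ≠ 0) (hq : ∃ x ∈ X, eval x q ≠ 0) : ∃ x ∈ X, eval x (p * q) ≠ 0 := by
  by_contra hc
  push Not at hc
  obtain ⟨x, hx, hx'⟩ := hp
  obtain ⟨y, hy, hy'⟩ := hq
  rcases hX.2 p q hc with h | h
  · exact hx' (h x hx)
  · exact hy' (h y hy)

/-- restriction of polynomials to `X` -/
def resX (X : Set (σ → K)) : MvPolynomial σ K →ₗ[K] (X → K) where
  toFun p x := eval x.1 p
  map_add' p q := by ext x; simp
  map_smul' a p := by ext x; simp [smul_eval]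

/-- degree `d` forms restricted to `X` -/
def RX (X : Set (σ → K)) (d : ℕ) : Submodule K (X → K) :=
  (homogeneousSubmodule σ K d).map (resX X)

instance RX.fin (X : Set (σ → K)) (d : ℕ) : FiniteDimensional K (RX X d) := by
  have : FiniteDimensional K (homogeneousSubmodule σ K d) := Module.Basis.finiteDimensional_of_finite (Wb K σ d)
  unfold RX
  infer_instance

/-- linear form from functional -/
def linF (φ : (σ → K) →ₗ[K] K) : MvPolynomial σ K := by
  classical
  exact ∑ s, C (φ (Pi.single s 1)) * X s

theorem linF_homog (φ : (σ → K) →ₗ[K] K) : (linF φ).IsHomogeneous 1 :=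
  IsHomogeneous.sum _ _ _ fun _ _ => isHomogeneous_C_mul_X _ _

theorem eval_linF (φ : (σ → K) →ₗ[K] K) (x : σ → K) : eval x (linF φ) = φ x := by
  classical
  have : x = ∑ s, x s • (Pi.single s (1 : K) : σ → K) := pi_eq_sum_univ' x
  conv_rhs => rw [this, map_sum]
  simp only [linF, map_sum, map_mul, eval_C, eval_X, map_smul, smul_eq_mul]
  refine Finset.sum_congr rfl fun s _ => ?_
  rw [mul_comm]

theorem exists_dual {n : ℕ} {q : Fin n → σ → K} (h : LinearIndependent K q) :
    ∃ φ : Fin n → (σ → K) →ₗ[K] K, ∀ i j, φ i (q j) = if i = j then 1 else 0 := by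
  have hinj : LinearMap.ker (Fintype.linearCombination K q) = ⊥ := by
    rw [LinearMap.ker_eq_bot]
    exact h.fintypeLinearCombination_injective
  obtain ⟨g, hg⟩ := LinearMap.exists_leftInverse_of_injective _ hinj
  refine ⟨fun i => (LinearMap.proj i).comp g, fun i j => ?_⟩
  have h1 : q j = Fintype.linearCombination K q (Pi.single j 1) := by
    simp [Fintype.linearCombination_apply_single]
  have := LinearMap.congr_fun hg (Pi.single j 1)
  simp only [LinearMap.comp_apply, LinearMap.proj_apply, LinearMap.id_apply] at this ⊢
  rw [h1, this, Pi.single_apply]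

theorem hilb {X : Set (σ → K)} (hX : IrrX X) {e : ℕ}
    (he : Module.finrank K (Submodule.span K X) = e + 1) (d : ℕ) :
    d * e + 1 ≤ Module.finrank K (RX X d) := by
  have hex := Submodule.exists_fun_fin_finrank_span_eq K X
  rw [he] at hex
  obtain ⟨q, hq, -, hli⟩ := hex
  obtain ⟨φ, hφ⟩ := exists_dual hli
  induction d with
  | zero =>
    obtain ⟨x, hx⟩ := hX.1
    have : 0 < Module.finrank K (RX X 0) := by
      rw [Module.finrank_pos_iff_exists_ne_zero]
      refine ⟨⟨resX X 1, 1, isHomogeneous_one _ _, rfl⟩, fun h => ?_⟩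
      have := congrFun (congrArg Subtype.val h) ⟨x, hx⟩
      simp [resX] at this
    omega
  | succ d ih =>
    let ev : RX X (d + 1) →ₗ[K] (Fin e → K) := LinearMap.pi fun l =>
      (LinearMap.proj (⟨q l.castSucc, hq _⟩ : X)).comp (RX X (d + 1)).subtype
    have hsurj : LinearMap.range ev = ⊤ := by
      rw [LinearMap.range_eq_top]
      intro y
      have hG : (∑ i : Fin e, C (y i) * linF (φ i.castSucc) ^ (d + 1)).IsHomogeneous (d + 1) := by
        refine IsHomogeneous.sum _ _ _ fun i _ => ?_
        have := ((linF_homog (φ i.castSucc)).pow (d + 1)).C_mul (y i)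
        rwa [one_mul] at this
      refine ⟨⟨_, _, hG, rfl⟩, ?_⟩
      ext l
      change eval (q l.castSucc) (∑ i : Fin e, C (y i) * linF (φ i.castSucc) ^ (d + 1)) = y l
      simp [eval_linF, hφ]
    let ℓ := linF (φ (Fin.last e))
    have hmul : ∀ g ∈ RX X d, resX X ℓ * g ∈ RX X (d + 1) := by
      rintro _ ⟨G, hG, rfl⟩
      refine ⟨ℓ * G, ?_, ?_⟩
      · have := (linF_homog (φ (Fin.last e))).mul hG
        rwa [add_comm] at this
      · ext x; simp [resX]
    let μ : RX X d →ₗ[K] LinearMap.ker ev :=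
      LinearMap.codRestrict _ (LinearMap.codRestrict _
        ((LinearMap.mulLeft K (resX X ℓ)).comp (RX X d).subtype) (fun g => hmul g.1 g.2)) (by
          intro g
          rw [LinearMap.mem_ker]
          ext l
          change eval (q l.castSucc) ℓ * g.1 ⟨q l.castSucc, hq _⟩ = 0
          rw [eval_linF, hφ, if_neg (Fin.castSucc_lt_last l).ne', zero_mul])
    have hμ : Function.Injective μ := by
      refine (injective_iff_map_eq_zero μ).2 ?_
      rintro ⟨_, G, hG, rfl⟩ hg
      have h0 : ∀ x ∈ X, eval x (ℓ * G) = 0 := by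
        intro x hx
        have := congrFun (congrArg (fun a => a.1.1) hg) ⟨x, hx⟩
        rw [map_mul]
        exact this
      rcases hX.2 _ _ h0 with h | h
      · have := h _ (hq (Fin.last e))
        rw [eval_linF, hφ, if_pos rfl] at this
        exact absurd this one_ne_zero
      · apply Subtype.ext
        ext x
        exact h x.1 x.2
    have h1 := LinearMap.finrank_range_add_finrank_ker ev
    have h2 := LinearMap.finrank_le_finrank_of_injective hμ
    rw [hsurj, finrank_top, Module.finrank_fin_fun] at h1
    have h3 : (d + 1) * e = d * e + e := by ring
    omega

theorem exists_form {X : Set (σ → K)} {k : ℕ} (hk : k < Module.finrank K (RX X d))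
    (p : Fin k → σ → K) (hp : ∀ l, p l ∈ X) : ∃ G : MvPolynomial σ K, G.IsHomogeneous d ∧
      (∀ l, eval (p l) G = 0) ∧ ∃ x ∈ X, eval x G ≠ 0 := by
  let ev : RX X d →ₗ[K] (Fin k → K) := LinearMap.pi fun l =>
    (LinearMap.proj (⟨p l, hp l⟩ : X)).comp (RX X d).subtype
  have : LinearMap.ker ev ≠ ⊥ := LinearMap.ker_ne_bot_of_finrank_lt (by simpa using hk)
  obtain ⟨⟨_, G, hG, rfl⟩, hf, hf0⟩ := (Submodule.ne_bot_iff _).1 this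
  refine ⟨G, hG, fun l => ?_, ?_⟩
  · exact congrFun (LinearMap.mem_ker.1 hf) l
  · by_contra hc
    push Not at hc
    apply hf0
    apply Subtype.ext
    ext x
    exact hc x.1 x.2

theorem tri_indep {n : ℕ} (p : Fin n → σ → K)
    (h : ∀ i, ∃ G : MvPolynomial σ K, G.IsHomogeneous d ∧ eval (p i) G ≠ 0 ∧ ∀ l < i, eval (p l) G = 0)
    (c : Fin n → K) (hc : ∀ m : Mon σ d, ∑ l, c l * eval (p l) (monomial m.1 1) = 0) : c = 0 := by
  classical
  by_contra hne
  have hS : (Finset.univ.filter fun l => c l ≠ 0).Nonempty := by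
    by_contra hS
    rw [Finset.not_nonempty_iff_eq_empty, Finset.filter_eq_empty_iff] at hS
    apply hne
    ext l
    simpa using hS (Finset.mem_univ l)
  obtain ⟨l, hl, hmax⟩ := Finset.exists_max_image _ id hS
  obtain ⟨G, hG, hGl, hGlt⟩ := h l
  have h1 : ∑ l, c l * eval (p l) G = 0 := by
    simp only [homog_eval hG, Finset.mul_sum]
    rw [Finset.sum_comm]
    refine Finset.sum_eq_zero fun m _ => ?_
    have := congrArg (fun a => coeff m.1 G * a) (hc m)
    simp only [Finset.mul_sum, mul_zero] at this
    rw [← this]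
    refine Finset.sum_congr rfl fun l _ => ?_
    ring
  rw [Finset.sum_eq_single l] at h1
  · exact (mul_ne_zero (Finset.mem_filter.1 hl).2 hGl) h1
  · intro l' _ hl'
    rcases lt_or_gt_of_ne hl' with h | h
    · rw [hGlt l' h, mul_zero]
    · have : c l' = 0 := by
        by_contra hc'
        have := hmax l' (Finset.mem_filter.2 ⟨Finset.mem_univ _, hc'⟩)
        exact absurd h (not_lt.2 this)
      rw [this, zero_mul]
  · simp

theorem fiber_aux [Infinite K] {X : Set (σ → K)} (hX : IrrX X) {e : ℕ}
    (he : Module.finrank K (Submodule.span K X) = e + 1) (c : Fin 2 → σ)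
    (hc : ∀ g : MvPolynomial (Fin 2) K, g ≠ 0 → ∃ x ∈ X, eval (fun ε => x (c ε)) g ≠ 0)
    (k : ℕ) (hk : k ≤ d * e + 1) :
    ZD {z : Fin k × Fin 2 → K | ∃ p : ℕ → σ → K, (∀ i < k, p i ∈ X) ∧
      (∀ i < k, ∃ G : MvPolynomial σ K, G.IsHomogeneous d ∧ eval (p i) G ≠ 0 ∧ ∀ l < i, eval (p l) G = 0) ∧
      (∀ i < k, i < e + 1 → ∃ G : MvPolynomial σ K, G.IsHomogeneous 1 ∧ eval (p i) G ≠ 0 ∧ ∀ l < i, eval (p l) G = 0) ∧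
      z = fun t => p t.1 (c t.2)} := by
  induction k with
  | zero =>
    refine ZD.univ.mono fun z _ => ⟨0, by simp, by simp, by simp, ?_⟩
    exact Subsingleton.elim _ _
  | succ k ih =>
    have ih := ih (by omega)
    choose! p hp1 hp2 hp3 hp4 using fun (z : Fin k × Fin 2 → K) (hz : z ∈ {z : Fin k × Fin 2 → K | ∃ p : ℕ → σ → K, (∀ i < k, p i ∈ X) ∧
      (∀ i < k, ∃ G : MvPolynomial σ K, G.IsHomogeneous d ∧ eval (p i) G ≠ 0 ∧ ∀ l < i, eval (p l) G = 0) ∧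
      (∀ i < k, i < e + 1 → ∃ G : MvPolynomial σ K, G.IsHomogeneous 1 ∧ eval (p i) G ≠ 0 ∧ ∀ l < i, eval (p l) G = 0) ∧
      z = fun t => p t.1 (c t.2)}) => hz
    have hstep := ih.prod (E := fun z => {y : Fin 2 → K | ∃ x ∈ X, y = (fun ε => x (c ε)) ∧
        (∃ G : MvPolynomial σ K, G.IsHomogeneous d ∧ eval x G ≠ 0 ∧ ∀ l < k, eval (p z l) G = 0) ∧
        (k < e + 1 → ∃ G : MvPolynomial σ K, G.IsHomogeneous 1 ∧ eval x G ≠ 0 ∧ ∀ l < k, eval (p z l) G = 0)}) (by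
      intro z hz g hg
      by_contra hg0
      obtain ⟨x₀, hx₀, hgx₀⟩ := hc g hg0
      have h1 : ∃ x ∈ X, eval x (aeval (R := K) (fun ε => (MvPolynomial.X (c ε) : MvPolynomial σ K)) g) ≠ 0 :=
        ⟨x₀, hx₀, by rw [eval_aeval_aux]; simpa using hgx₀⟩
      obtain ⟨G, hG, hGl, hGX⟩ := exists_form (d := d) (lt_of_lt_of_le (by omega) (hilb hX he d))
        (fun l : Fin k => p z l) (fun l => hp1 z hz l l.2)
      obtain ⟨H, hH, hHX⟩ : ∃ H : MvPolynomial σ K, (k < e + 1 → H.IsHomogeneous 1 ∧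
          ∀ l < k, eval (p z l) H = 0) ∧ ∃ x ∈ X, eval x H ≠ 0 := by
        by_cases hke : k < e + 1
        · obtain ⟨H, hH, hHl, hHX⟩ := exists_form (d := 1)
            (lt_of_lt_of_le (by omega) (hilb hX he 1))
            (fun l : Fin k => p z l) (fun l => hp1 z hz l l.2)
          exact ⟨H, fun _ => ⟨hH, fun l hl => hHl ⟨l, hl⟩⟩, hHX⟩
        · obtain ⟨x, hx⟩ := hX.1
          exact ⟨1, fun h => absurd h hke, x, hx, by simp⟩
      obtain ⟨x, hx, hne⟩ := hX.exists_mul (hX.exists_mul h1 hGX) hHX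
      rw [map_mul, map_mul] at hne
      have hne1 := left_ne_zero_of_mul (left_ne_zero_of_mul hne)
      apply hne1
      rw [eval_aeval_aux]
      simp only [eval_X]
      apply hg
      refine ⟨x, hx, rfl, ⟨G, hG, right_ne_zero_of_mul (left_ne_zero_of_mul hne), fun l hl => hGl ⟨l, hl⟩⟩, fun hke => ?_⟩
      exact ⟨H, (hH hke).1, right_ne_zero_of_mul hne, (hH hke).2⟩)
    let φ : Fin (k + 1) × Fin 2 → (Fin k × Fin 2) ⊕ Fin 2 := fun t =>
      Fin.lastCases (motive := fun _ => (Fin k × Fin 2) ⊕ Fin 2) (Sum.inr t.2) (fun i => Sum.inl (i, t.2)) t.1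
    have hφ : Function.Injective φ := by
      have h1 : ∀ ε, φ (Fin.last k, ε) = Sum.inr ε := fun ε => by
        simp only [φ, Fin.lastCases_last]
      have h2 : ∀ i ε, φ (Fin.castSucc i, ε) = Sum.inl (i, ε) := fun i ε => by
        simp only [φ, Fin.lastCases_castSucc]
      clear_value φ
      clear hstep ih hp1 hp2 hp3 hp4
      rintro ⟨i, ε⟩ ⟨j, δ⟩ h
      induction i using Fin.lastCases with
      | last =>
        induction j using Fin.lastCases with
        | last => rw [h1, h1, Sum.inr.injEq] at h; rw [h]
        | cast j => rw [h1, h2] at h; cases h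
      | cast i =>
        induction j using Fin.lastCases with
        | last => rw [h1, h2] at h; cases h
        | cast j =>
          rw [h2, h2, Sum.inl.injEq, Prod.mk.injEq] at h
          rw [h.1, h.2]
    refine (hstep.comp_inj hφ).mono ?_
    rintro _ ⟨_, ⟨z, hz, y, ⟨x, hx, rfl, hG, hH⟩, rfl⟩, rfl⟩
    have hup : ∀ l, l < k → Function.update (p z) k x l = p z l := fun l hl =>
      Function.update_of_ne hl.ne _ _
    have hupk : Function.update (p z) k x k = x := Function.update_self _ _ _
    refine ⟨Function.update (p z) k x, ?_, ?_, ?_, ?_⟩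
    · intro i hi
      rcases Nat.lt_succ_iff_lt_or_eq.1 hi with h | rfl
      · rw [hup i h]; exact hp1 z hz i h
      · rw [hupk]; exact hx
    · intro i hi
      rcases Nat.lt_succ_iff_lt_or_eq.1 hi with h | rfl
      · obtain ⟨G, h1, h2, h3⟩ := hp2 z hz i h
        exact ⟨G, h1, by rwa [hup i h], fun l hl => by rw [hup l (hl.trans h)]; exact h3 l hl⟩
      · obtain ⟨G, h1, h2, h3⟩ := hG
        exact ⟨G, h1, by rwa [hupk], fun l hl => by rw [hup l hl]; exact h3 l hl⟩
    · intro i hi hie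
      rcases Nat.lt_succ_iff_lt_or_eq.1 hi with h | rfl
      · obtain ⟨G, h1, h2, h3⟩ := hp3 z hz i h hie
        exact ⟨G, h1, by rwa [hup i h], fun l hl => by rw [hup l (hl.trans h)]; exact h3 l hl⟩
      · obtain ⟨G, h1, h2, h3⟩ := hH hie
        exact ⟨G, h1, by rwa [hupk], fun l hl => by rw [hup l hl]; exact h3 l hl⟩
    · ext ⟨i, ε⟩
      induction i using Fin.lastCases with
      | last => simp [φ, hupk]
      | cast i =>
        have := congrFun (hp4 z hz) (i, ε)
        simp [φ, hup _ i.2]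
        exact this

/-- points from parameters -/
def pts {e m : ℕ} (v : Fin e → σ → K) (a : Fin m → Fin e → K) : Fin e ⊕ Fin m → σ → K :=
  Sum.elim v fun b s => ∑ j, a b j * v j s

theorem fiberZD [Infinite K] {X : Set (σ → K)} (hX : IrrX X) {e m : ℕ}
    (he : Module.finrank K (Submodule.span K X) = e + 1) (c : Fin 2 → σ)
    (hc : ∀ g : MvPolynomial (Fin 2) K, g ≠ 0 → ∃ x ∈ X, eval (fun ε => x (c ε)) g ≠ 0)
    (hm : e + 1 + m = d * e + 1) :
    ZD {z : (Fin (e + 1) ⊕ Fin m) × Fin 2 → K | ∃ (v : Fin (e + 1) → σ → K) (a : Fin m → Fin (e + 1) → K),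
      (∀ l, pts v a l ∈ X) ∧
      (∃ B : Fin (e + 1) ⊕ Fin m → Mon σ d,
        (Matrix.of fun i l => eval (pts v a l) (monomial (B i).1 1)).det ≠ 0) ∧
      z = fun t => pts v a t.1 (c t.2)} := by
  have h := fiber_aux (d := d) hX he c hc (e + 1 + m) hm.le
  have h' := h.comp_inj (φ := Prod.map finSumFinEquiv id)
    (finSumFinEquiv.injective.prodMap Function.injective_id)
  refine h'.mono ?_
  rintro _ ⟨_, ⟨p, hp1, hp2, hp3, rfl⟩, rfl⟩
  let v : Fin (e + 1) → σ → K := fun i => p i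
  have hvX : ∀ i, v i ∈ X := fun i => hp1 i (by omega)
  have hli : LinearIndependent K v := by
    rw [Fintype.linearIndependent_iff]
    intro g hg
    have := tri_indep (d := 1) v (fun i => by
      obtain ⟨G, h1, h2, h3⟩ := hp3 i (by omega) i.2
      exact ⟨G, h1, h2, fun l hl => h3 l hl⟩) g (by
      intro mm
      obtain ⟨s, hs⟩ := (Finsupp.sum_eq_one_iff mm.1).1 mm.2
      have := congrFun hg s
      rw [hs]
      simpa [eval_monomial] using this)
    exact fun i => congrFun this i
  have hspan : Submodule.span K (Set.range v) = Submodule.span K X := by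
    apply Submodule.eq_of_le_of_finrank_eq
    · exact Submodule.span_mono (by rintro _ ⟨i, rfl⟩; exact hvX i)
    · rw [he, finrank_span_eq_card hli, Fintype.card_fin]
  have hmem : ∀ b : Fin m, ∃ a : Fin (e + 1) → K, ∑ j, a j • v j = p (e + 1 + b) := by
    intro b
    rw [← Submodule.mem_span_range_iff_exists_fun, hspan]
    exact Submodule.subset_span (hp1 _ (by omega))
  choose a ha using hmem
  have hpts : ∀ l, pts v a l = p (finSumFinEquiv l) := by
    rintro (l | b)
    · simp [pts, v]
    · simp only [pts, Sum.elim_inr, finSumFinEquiv_apply_right, Fin.val_natAdd]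
      rw [← ha b]
      ext s
      simp
  refine ⟨v, a, fun l => ?_, ?_, ?_⟩
  · rw [hpts]; exact hp1 _ (finSumFinEquiv l).2
  · apply exists_det_ne (fun (mm : Mon σ d) (l : Fin (e + 1) ⊕ Fin m) => eval (pts v a l) (monomial mm.1 1))
    intro g hg
    have := tri_indep (d := d) (fun l : Fin (e + 1 + m) => p l) (fun i => by
      obtain ⟨G, h1, h2, h3⟩ := hp2 i i.2
      exact ⟨G, h1, h2, fun l hl => h3 l hl⟩) (g ∘ finSumFinEquiv.symm) (by
      intro mm
      rw [← hg mm, ← finSumFinEquiv.sum_comp]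
      refine Finset.sum_congr rfl fun l _ => ?_
      rw [hpts]
      simp)
    ext l
    have := congrFun this (finSumFinEquiv l)
    simpa using this
  · ext ⟨l, ε⟩
    simp [hpts]

end Fibers

noncomputable section ExistsX

variable {K : Type*} [Field K] {σ : Type*} [Fintype σ] {d : ℕ} {J : Type*} [Fintype J]

theorem exists_P (I : Ideal (MvPolynomial σ K)) (h : 2 ≤ ringKrullDim (MvPolynomial σ K ⧸ I)) :
    ∃ P : Ideal (MvPolynomial σ K), P.IsPrime ∧ I ≤ P ∧ 2 ≤ ringKrullDim (MvPolynomial σ K ⧸ P) := by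
  rw [ringKrullDim_quotient] at h
  obtain ⟨l, hl⟩ := (Order.le_krullDim_iff (n := 2)).1 h
  refine ⟨(l 0).1.asIdeal, (l 0).1.isPrime, (l 0).2, ?_⟩
  rw [ringKrullDim_quotient]
  refine (Order.le_krullDim_iff (n := 2)).2 ⟨⟨l.length, fun i => ⟨(l i).1, ?_⟩, fun i => l.step i⟩, hl⟩
  exact l.monotone (Fin.zero_le i)

theorem exists_X [IsAlgClosed K] (F : Tup K σ J d)
    (hF : (2 : WithBot ℕ∞) ≤ ringKrullDim (MvPolynomial σ K ⧸ Ideal.span (Set.range fun i => (F i : MvPolynomial σ K))))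
    (hL : F ∉ LS K σ J d) :
    ∃ (X : Set (σ → K)) (e : ℕ) (c : Fin 2 → σ), IrrX X ∧
      Module.finrank K (Submodule.span K X) = e + 1 ∧ 2 ≤ e ∧
      (∀ g : MvPolynomial (Fin 2) K, g ≠ 0 → ∃ x ∈ X, eval (fun ε => x (c ε)) g ≠ 0) ∧
      ∀ x ∈ X, ∀ i, eval x (F i : MvPolynomial σ K) = 0 := by
  obtain ⟨P, hP, hIP, hdim⟩ := exists_P _ hF
  have hadj : Algebra.adjoin K (Set.range fun s => Ideal.Quotient.mk P (X s)) = ⊤ := by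
    have h1 := congrArg (Subalgebra.map (Ideal.Quotient.mkₐ K P)) (adjoin_range_X (R := K) (σ := σ))
    rw [AlgHom.map_adjoin, ← Set.range_comp, Algebra.map_top,
      (AlgHom.range_eq_top _).2 (Ideal.Quotient.mkₐ_surjective K P)] at h1
    exact h1
  obtain ⟨i, j, hij⟩ := aux_two K _ _ hadj hdim
  have hmem : ∀ p : MvPolynomial σ K, p ∈ P ↔ ∀ x ∈ zeroLocus K P, eval x p = 0 := by
    intro p
    conv_lhs => rw [← MvPolynomial.IsPrime.vanishingIdeal_zeroLocus (K := K) P]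
    rfl
  have hc : ∀ g : MvPolynomial (Fin 2) K, g ≠ 0 →
      ∃ x ∈ zeroLocus K P, eval (fun ε => x (![i, j] ε)) g ≠ 0 := by
    intro g hg
    by_contra hcon
    push Not at hcon
    apply hg
    apply hij
    have h1 : aeval (R := K) (fun ε => (X (![i, j] ε) : MvPolynomial σ K)) g ∈ P := by
      rw [hmem]
      intro x hx
      rw [eval_aeval_aux]
      simpa using hcon x hx
    have h2 := Ideal.Quotient.eq_zero_iff_mem.2 h1
    rw [map_zero, ← h2]
    change _ = Ideal.Quotient.mkₐ K P _
    rw [← AlgHom.comp_apply, comp_aeval]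
    congr 2
    ext ε
    fin_cases ε <;> rfl
  have hIrr : IrrX (zeroLocus K P) := by
    constructor
    · obtain ⟨x, hx, -⟩ := hc 1 one_ne_zero
      exact ⟨x, hx⟩
    · intro p q hpq
      rw [← hmem, ← hmem]
      exact hP.mem_or_mem ((hmem _).2 hpq)
  have hFX : ∀ x ∈ zeroLocus K P, ∀ i, eval x (F i : MvPolynomial σ K) = 0 := by
    intro x hx i
    exact (hmem _).1 (hIP (Ideal.subset_span ⟨i, rfl⟩)) x hx
  refine ⟨zeroLocus K P, Module.finrank K (Submodule.span K (zeroLocus K P)) - 1, ![i, j], hIrr, ?_⟩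
  suffices h3 : 3 ≤ Module.finrank K (Submodule.span K (zeroLocus K P)) from
    ⟨by omega, by omega, hc, hFX⟩
  generalize ![i, j] = c at hc
  generalize zeroLocus K P = X at *
  let π : Submodule.span K X →ₗ[K] (Fin 2 → K) :=
    (LinearMap.funLeft K K c).comp (Submodule.span K X).subtype
  have hsurj : LinearMap.range π = ⊤ := by
    by_contra hne
    obtain ⟨f, hf, hle⟩ := Submodule.exists_le_ker_of_lt_top _ (lt_top_iff_ne_top.2 hne)
    have hg : linF f ≠ 0 := by
      intro h0
      apply hf
      refine LinearMap.ext fun x => ?_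
      rw [← eval_linF, h0, map_zero, LinearMap.zero_apply]
    obtain ⟨x, hx, hne⟩ := hc _ hg
    apply hne
    rw [eval_linF]
    exact hle ⟨⟨x, Submodule.subset_span hx⟩, rfl⟩
  have h2 : 2 ≤ Module.finrank K (Submodule.span K X) := by
    have := LinearMap.finrank_range_le π
    rwa [hsurj, finrank_top, Module.finrank_fin_fun] at this
  by_contra h3
  have h2' : Module.finrank K (Submodule.span K X) = 2 := by omega
  have hinj : Function.Injective π :=
    (LinearMap.injective_iff_surjective_of_finrank_eq_finrank (by rw [h2', Module.finrank_fin_fun])).2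
      (LinearMap.range_eq_top.1 hsurj)
  let E := LinearEquiv.ofBijective π ⟨hinj, LinearMap.range_eq_top.1 hsurj⟩
  let v : σ → K := E.symm (Pi.single 0 1)
  let w : σ → K := E.symm (Pi.single 1 1)
  have hE : ∀ y : Fin 2 → K, (E.symm y : σ → K) = fun s => y 0 * v s + y 1 * w s := by
    intro y
    have : y = y 0 • (Pi.single 0 1 : Fin 2 → K) + y 1 • (Pi.single 1 1 : Fin 2 → K) := by
      ext t; fin_cases t <;> simp
    conv_lhs => rw [this, map_add, map_smul, map_smul]
    ext s
    simp [v, w]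
  have hEc : ∀ y : Fin 2 → K, (fun ε => (E.symm y : σ → K) (c ε)) = y := fun y => E.apply_symm_apply y
  apply hL
  refine ⟨v, w, ?_, ?_⟩
  · rw [LinearIndependent.pair_iff]
    intro s t hst
    have h1 := hE ![s, t]
    have h0 : (E.symm ![s, t] : σ → K) = 0 := by
      rw [h1, ← hst]
      ext a
      simp
    have := hEc ![s, t]
    rw [h0] at this
    exact ⟨(congrFun this 0).symm, (congrFun this 1).symm⟩
  · intro i s t
    let h : MvPolynomial (Fin 2) K := aeval (R := K) (fun a => (C (v a) * MvPolynomial.X 0 + C (w a) * MvPolynomial.X 1 : MvPolynomial (Fin 2) K))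
      (F i : MvPolynomial σ K)
    have hh : ∀ y, eval y h = eval (E.symm y : σ → K) (F i : MvPolynomial σ K) := by
      intro y
      rw [eval_aeval_aux, hE]
      congr 2
      ext a
      simp [mul_comm]
    have h0 : h = 0 := by
      by_contra hne
      obtain ⟨x, hx, hxne⟩ := hc h hne
      apply hxne
      rw [hh]
      have : E.symm (fun ε => x (c ε)) = ⟨x, Submodule.subset_span hx⟩ := by
        rw [LinearEquiv.symm_apply_eq]; rfl
      rw [this]
      exact hFX x hx i
    have := hh ![s, t]
    rw [h0, map_zero, hE] at this
    exact this.symm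

end ExistsX

noncomputable section Counting

variable {K : Type*} [Field K] {σ : Type*} [Fintype σ] {d : ℕ} {J : Type*} [Fintype J]

theorem count_le [Infinite K] {S : Set (Tup K σ J d)} {s e m : ℕ} {f : Fin s → Tup K σ J d → K}
    (hf : ∀ t, f t ∈ PF K (Tup K σ J d)) (hZD : ZD {z | ∃ F ∈ S, z = fun t => f t F})
    (c : Fin 2 → σ)
    (hS : ∀ F ∈ S, ZD {z : (Fin e ⊕ Fin m) × Fin 2 → K | ∃ (v : Fin e → σ → K) (a : Fin m → Fin e → K),
      (∀ l i, eval (pts v a l) (F i : MvPolynomial σ K) = 0) ∧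
      (∃ B : Fin e ⊕ Fin m → Mon σ d,
        (Matrix.of fun i l => eval (pts v a l) (monomial (B i).1 1)).det ≠ 0) ∧
      z = fun t => pts v a t.1 (c t.2)}) :
    s + (e + m) * 2 + Fintype.card J * (e + m) ≤
      e * Fintype.card σ + (m * e + Fintype.card J * Fintype.card (Mon σ d)) := by
  classical
  -- incidence
  choose! F hFS hFz using fun (z : Fin s → K) (hz : z ∈ {z | ∃ F ∈ S, z = fun t => f t F}) => hz
  have h1 := hZD.prod (fun z hz => hS (F z) (hFS z hz))
  let Mx : (Fin e → σ → K) → (Fin m → Fin e → K) → (Fin e ⊕ Fin m → Mon σ d) →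
    Matrix (Fin e ⊕ Fin m) (Fin e ⊕ Fin m) K := fun v a B =>
      Matrix.of fun i l => eval (pts v a l) (monomial (B i).1 1)
  obtain ⟨B, hB⟩ := ZD.exists_of_iUnion (D := fun B : Fin e ⊕ Fin m → Mon σ d =>
    {z : Fin s ⊕ ((Fin e ⊕ Fin m) × Fin 2) → K | ∃ (F : Tup K σ J d) (v : Fin e → σ → K)
      (a : Fin m → Fin e → K), (∀ l i, eval (pts v a l) (F i : MvPolynomial σ K) = 0) ∧
      (Mx v a B).det ≠ 0 ∧ z = Sum.elim (fun t => f t F) (fun t => pts v a t.1 (c t.2))}) (by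
    refine h1.mono ?_
    rintro _ ⟨z, hz, y, ⟨v, a, hv, ⟨B, hB⟩, rfl⟩, rfl⟩
    refine Set.mem_iUnion.2 ⟨B, F z, v, a, hv, hB, ?_⟩
    rw [← hFz z hz])
  have h2 := hB.prod (E := fun _ => (Set.univ : Set (J × (Fin e ⊕ Fin m) → K))) (fun _ _ => ZD.univ)
  -- parametrisation
  let U := (Fin e × σ) ⊕ ((Fin m × Fin e) ⊕ (J × Mon σ d))
  let vu : (U → K) → Fin e → σ → K := fun u j s => u (.inl (j, s))
  let au : (U → K) → Fin m → Fin e → K := fun u b j => u (.inr (.inl (b, j)))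
  let Gu : (U → K) → Tup K σ J d := fun u j =>
    ⟨∑ mm : Mon σ d, monomial mm.1 (u (.inr (.inr (j, mm)))),
      IsHomogeneous.sum _ _ _ fun mm _ => isHomogeneous_monomial _ mm.2⟩
  let pu : (U → K) → Fin e ⊕ Fin m → σ → K := fun u => pts (vu u) (au u)
  let mB : Fin e ⊕ Fin m → homogeneousSubmodule σ K d := fun i =>
    ⟨monomial (B i).1 1, isHomogeneous_monomial _ (B i).2⟩
  let Fu : (U → K) → Tup K σ J d := fun u j => (Mx (vu u) (au u) B).det • Gu u j -
    ∑ i, (∑ l, eval (pu u l) (Gu u j : MvPolynomial σ K) * (Mx (vu u) (au u) B).adjugate l i) • mB i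
  have hpu : ∀ l t, (fun u => pu u l t) ∈ PF K (U → K) := by
    rintro (l | b) t
    · exact PF_coord _
    · exact PF_sum (K := K) (M := U → K) Finset.univ
        (f := fun j u => u (.inr (.inl (b, j))) * u (.inl (j, t)))
        fun j _ => PF_mul (PF_coord _) (PF_coord _)
  have hMx : ∀ i l, (fun u => Mx (vu u) (au u) B i l) ∈ PF K (U → K) := by
    intro i l
    exact PF_eval (hpu l) _
  have hGu : ∀ l j, (fun u => eval (pu u l) (Gu u j : MvPolynomial σ K)) ∈ PF K (U → K) := by
    intro l j
    have : (fun u => eval (pu u l) (Gu u j : MvPolynomial σ K)) = fun u =>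
        ∑ mm : Mon σ d, u (.inr (.inr (j, mm))) * eval (pu u l) (monomial mm.1 1) := by
      ext u
      simp [Gu, eval_monomial]
    rw [this]
    exact PF_sum _ fun mm _ => PF_mul (PF_coord _) (PF_eval (hpu l) _)
  have hGx : ∀ j x, (fun u => eval x (Gu u j : MvPolynomial σ K)) ∈ PF K (U → K) := by
    intro j x
    have : (fun u => eval x (Gu u j : MvPolynomial σ K)) = fun u =>
        ∑ mm : Mon σ d, u (.inr (.inr (j, mm))) * eval x (monomial mm.1 1) := by
      ext u
      simp [Gu, eval_monomial]
    rw [this]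
    exact PF_sum _ fun mm _ => PF_mul (PF_coord _) (PF_const _)
  have hFx : ∀ j x, (fun u => eval x (Fu u j : MvPolynomial σ K)) ∈ PF K (U → K) := by
    intro j x
    have : (fun u => eval x (Fu u j : MvPolynomial σ K)) = fun u =>
        (Mx (vu u) (au u) B).det * eval x (Gu u j : MvPolynomial σ K) -
        ∑ i, (∑ l, eval (pu u l) (Gu u j : MvPolynomial σ K) * (Mx (vu u) (au u) B).adjugate l i) *
          eval x (monomial (B i).1 1) := by
      ext u
      simp only [Fu, mB, Submodule.coe_sub, Submodule.coe_smul, Submodule.coe_sum, map_sub, map_sum, smul_eval]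
    rw [this]
    exact PF_sub (PF_mul (PF_det hMx) (hGx j x)) (PF_sum _ fun i _ =>
      PF_mul (PF_sum _ fun l _ => PF_mul (hGu l j) (PF_adj hMx l i)) (PF_const _))
  let T := (Fin s ⊕ ((Fin e ⊕ Fin m) × Fin 2)) ⊕ (J × (Fin e ⊕ Fin m))
  let φ : T → (U → K) → K := Sum.elim (Sum.elim (fun t u => f t (Fu u)) (fun t u => pu u t.1 (c t.2)))
    (fun t u => eval (pu u t.2) (Gu u t.1 : MvPolynomial σ K))
  have hφ : ∀ t, φ t ∈ PF K (U → K) := by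
    rintro ((t | t) | t)
    · exact PF_comp_tup hFx (hf t)
    · exact hpu _ _
    · exact hGu _ _
  have hcard := ZD.card_le hφ (h2.mono (by
    rintro _ ⟨_, ⟨F, v, a, hv, hdet, rfl⟩, y, -, rfl⟩
    let D := (Mx v a B).det
    let h : J → Fin e ⊕ Fin m → K := fun j i => ∑ l, y (j, l) * (Mx v a B).adjugate l i
    let G : Tup K σ J d := fun j => D⁻¹ • (F j + ∑ i, h j i • mB i)
    let u : U → K := Sum.elim (fun t => v t.1 t.2) (Sum.elim (fun t => a t.1 t.2)
      (fun t => coeff t.2.1 (G t.1 : MvPolynomial σ K)))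
    have e1 : vu u = v := rfl
    have e2 : au u = a := rfl
    have e3 : Gu u = G := by
      ext1 j
      apply Subtype.ext
      exact (homog_sum (G j).2).symm
    have e4 : pu u = pts v a := rfl
    have e5 : ∀ j l, eval (pts v a l) (G j : MvPolynomial σ K) = y (j, l) := by
      intro j l
      simp only [G, Submodule.coe_smul, Submodule.coe_add, Submodule.coe_sum, smul_eval, map_add, map_sum, hv, zero_add, mB]
      have hm : ∑ i, h j i * Mx v a B i l = D * y (j, l) := by
        have h3 := Matrix.adjugate_mul (Mx v a B)
        have h4 : Matrix.vecMul (fun l => y (j, l)) ((Mx v a B).adjugate * Mx v a B) l = D * y (j, l) := by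
          rw [h3, Matrix.vecMul_smul, Matrix.vecMul_one]; rfl
        rw [← Matrix.vecMul_vecMul] at h4
        exact h4
      change D⁻¹ * ∑ i, h j i * Mx v a B i l = _
      rw [hm, inv_mul_cancel_left₀ hdet]
    have e6 : Fu u = F := by
      ext1 j
      simp only [Fu, e1, e2, e3, e4, e5]
      change D • G j - ∑ i, h j i • mB i = F j
      simp only [G]
      rw [smul_inv_smul₀ hdet, add_sub_cancel_right]
    refine ⟨u, ?_⟩
    ext t
    rcases t with (t | t) | t
    · simp only [φ, Sum.elim_inl, e6]
    · simp only [φ, Sum.elim_inl, Sum.elim_inr, e4]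
    · simp only [φ, Sum.elim_inr, e4, e3, e5]))
  simpa [T, U, Fintype.card_sum, Fintype.card_prod] using hcard

end Counting

noncomputable section Final

variable {K : Type*} [Field K]

theorem arith_aux {s e m k d N N' : ℕ} (h2 : 2 ≤ e) (he : e ≤ k + 1) (hd : 1 ≤ d)
    (hm : m = (d - 1) * e) (hN : N ≤ N' + (d + 1))
    (h : s + (e + 1 + m) * 2 + (k + 1) * (e + 1 + m) ≤ (e + 1) * (k + 2) + (m * (e + 1) + (k + 1) * N)) :
    s < (k + 1) * N' + 2 * k := by
  obtain ⟨D, rfl⟩ : ∃ D, d = D + 1 := ⟨d - 1, by omega⟩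
  obtain ⟨g, rfl⟩ : ∃ g, e = g + 2 := ⟨e - 2, by omega⟩
  obtain ⟨t, rfl⟩ : ∃ t, k = g + 1 + t := ⟨k - (g + 1), by omega⟩
  rw [Nat.add_sub_cancel] at hm
  subst hm
  have h1 := Nat.mul_le_mul_left (g + 1 + t + 1) hN
  zify at h h1 ⊢
  have p1 : (0 : ℤ) ≤ D * g := by positivity
  have p2 : (0 : ℤ) ≤ D * t := by positivity
  have p3 : (0 : ℤ) ≤ D * g * t := by positivity
  nlinarith

theorem dim_lt [IsAlgClosed K] {k d : ℕ} (hd : 1 ≤ d) (hk : 1 ≤ k)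
    [τ : TopologicalSpace (Tup K (Fin (k + 2)) (Fin (k + 1)) d)] (hτ : τ = zariskiTopology K _)
    {C : Set (Tup K (Fin (k + 2)) (Fin (k + 1)) d)} (hC : IsIrreducible C)
    (hCZ : ∀ F ∈ C, (2 : WithBot ℕ∞) ≤ ringKrullDim (MvPolynomial (Fin (k + 2)) K ⧸
      Ideal.span (Set.range fun i => (F i : MvPolynomial (Fin (k + 2)) K))))
    (hCL : ¬ C ⊆ LS K (Fin (k + 2)) (Fin (k + 1)) d) :
    dimSet C < dimSet (LS K (Fin (k + 2)) (Fin (k + 1)) d) := by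
  obtain ⟨s, f, hf, hdim, hZD⟩ := zar_upper hτ (Tb K _ _ d) hC
  have hcl : C ⊆ closure (C \ LS K (Fin (k + 2)) (Fin (k + 1)) d) := by
    have hu : C ⊆ closure (C \ LS K (Fin (k + 2)) (Fin (k + 1)) d) ∪ LS K (Fin (k + 2)) (Fin (k + 1)) d := by
      intro x hx
      by_cases hxL : x ∈ LS K (Fin (k + 2)) (Fin (k + 1)) d
      · exact Or.inr hxL
      · exact Or.inl (subset_closure ⟨hx, hxL⟩)
    have h3 := isPreirreducible_iff_isClosed_union_isClosed.1 hC.2 _ _ isClosed_closure (LS_closed hτ) hu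
    exact h3.resolve_right hCL
  let S : Fin (k + 2) × (Fin 2 → Fin (k + 2)) → Set (Tup K (Fin (k + 2)) (Fin (k + 1)) d) := fun q =>
    {F | ∃ X : Set (Fin (k + 2) → K), IrrX X ∧
      Module.finrank K (Submodule.span K X) = q.1 + 1 ∧ 2 ≤ (q.1 : ℕ) ∧
      (∀ g : MvPolynomial (Fin 2) K, g ≠ 0 → ∃ x ∈ X, eval (fun ε => x (q.2 ε)) g ≠ 0) ∧
      ∀ x ∈ X, ∀ i, eval x (F i : MvPolynomial (Fin (k + 2)) K) = 0}
  obtain ⟨q, hq⟩ := ZD.exists_of_iUnion (D := fun q => {z | ∃ F ∈ S q, z = fun t => f t F}) (by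
    refine (hZD _ hcl).mono ?_
    rintro _ ⟨F, ⟨hFC, hFL⟩, rfl⟩
    obtain ⟨X, e, c, h1, h2, h3, h4, h5⟩ := exists_X F (hCZ F hFC) hFL
    have hle : e + 1 ≤ k + 2 := by
      rw [← h2]
      have := Submodule.finrank_le (Submodule.span K X)
      rwa [Module.finrank_fin_fun] at this
    exact Set.mem_iUnion.2 ⟨(⟨e, by omega⟩, c), F, ⟨X, h1, h2, h3, h4, h5⟩, rfl⟩)
  obtain ⟨⟨e, he⟩, c⟩ := q
  have h2 : 2 ≤ e := by
    obtain ⟨_, ⟨F, ⟨X, _, _, h, _⟩, _⟩, _⟩ := hq.ne (g := 1) one_ne_zero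
    exact h
  have hcount := count_le (e := e + 1) (m := (d - 1) * e) hf hq c (by
    rintro F ⟨X, h1, h2, h3, h4, h5⟩
    have hm : e + 1 + (d - 1) * e = d * e + 1 := by
      obtain ⟨D, rfl⟩ : ∃ D, d = D + 1 := ⟨d - 1, by omega⟩
      rw [Nat.add_sub_cancel]; ring
    refine (fiberZD (d := d) h1 h2 c h4 hm).mono ?_
    rintro z ⟨v, a, hX, hB, hz⟩
    exact ⟨v, a, fun l i => h5 _ (hX l) i, hB, hz⟩)
  rw [Fintype.card_fin, Fintype.card_fin, ← Nat.card_eq_fintype_card] at hcount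
  have hlt := arith_aux h2 (by omega) hd rfl (card_NP k d) hcount
  refine lt_of_le_of_lt hdim (lt_of_lt_of_le ?_ (LS_lower hd hτ hk))
  exact_mod_cast hlt

end Final

noncomputable section Statement2

open MvPolynomial

variable (K : Type*) [Field K]

/-- The affine space `W_{r, d 0} × ⋯ × W_{r, d (n-1)}` of `n`-tuples of homogeneous
forms of degrees `d 0, …, d (n-1)` in the variables `x_0, …, x_r`. -/
abbrev tupleSpace (r n : ℕ) (d : Fin n → ℕ) : Type _ :=
  (i : Fin n) → ↥(homogeneousSubmodule (Fin (r + 1)) K (d i))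

/-- The Zariski topology on the affine space of tuples of forms. -/
instance (r n : ℕ) (d : Fin n → ℕ) : TopologicalSpace (tupleSpace K r n d) :=
  zariskiTopology K _

/-- The forms `F 0, …, F (n-1)` all vanish on a common line of `ℙ^r`. -/
def vanishOnCommonLine {r n : ℕ} {d : Fin n → ℕ} (F : tupleSpace K r n d) : Prop :=
  ∃ v w : Fin (r + 1) → K, LinearIndependent K ![v, w] ∧
    ∀ i : Fin n, ∀ s t : K,
      MvPolynomial.eval (fun j => s * v j + t * w j) (F i : MvPolynomial (Fin (r + 1)) K) = 0

/-- For `r ≥ 2` and equal degrees `d_1 = ⋯ = d_r = d ≥ 1`, let `Z` be the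
locus of `r`-tuples `(F_1, …, F_r)` of degree-`d` forms with `dim V(F_1, …, F_r) ≥ 1`, and
let `L` be the locus of tuples vanishing on a common line. Then `Z` has a unique irreducible
component of maximal dimension, and this component equals `L`: i.e. `L` is an irreducible
component (a maximal irreducible subset) of `Z`, and every other irreducible component of `Z`
has strictly smaller dimension. -/
theorem statement2 [IsAlgClosed K] (r dd : ℕ) (hr : 2 ≤ r) (hdd : 1 ≤ dd)
    (Z L : Set (tupleSpace K r r (fun _ => dd)))
    (hZ : Z = {F | vdimGE r r (fun i => (F i : MvPolynomial (Fin (r + 1)) K)) 1})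
    (hL : L = {F | vanishOnCommonLine K F}) :
    Maximal (fun t => t ⊆ Z ∧ IsIrreducible t) L ∧
      ∀ C : Set (tupleSpace K r r (fun _ => dd)),
        Maximal (fun t => t ⊆ Z ∧ IsIrreducible t) C → C ≠ L →
          dimSet C < dimSet L := by
  obtain ⟨k, rfl⟩ : ∃ k, r = k + 1 := ⟨r - 1, by omega⟩
  have hk : 1 ≤ k := by omega
  subst hZ
  have hLL : L = LS K (Fin (k + 2)) (Fin (k + 1)) dd := hL
  clear hL
  subst hLL
  have hLZ : LS K (Fin (k + 2)) (Fin (k + 1)) dd ⊆ {F : tupleSpace K (k + 1) (k + 1) (fun _ => dd) |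
      vdimGE (k + 1) (k + 1) (fun i => (F i : MvPolynomial (Fin (k + 1 + 1)) K)) 1} := fun F hF =>
    LS_dim (a := (0 : Fin (k + 2))) (b := 1) (by simp) F hF
  have hLirr : IsIrreducible (X := tupleSpace K (k + 1) (k + 1) (fun _ => dd))
      (LS K (Fin (k + 2)) (Fin (k + 1)) dd) :=
    zar_irred_of (K := K) rfl (Tb K _ _ dd) (LS_prime (a := (0 : Fin (k + 2))) (b := 1) (by simp))
  have hlt : ∀ C : Set (tupleSpace K (k + 1) (k + 1) (fun _ => dd)),
      C ⊆ {F | vdimGE (k + 1) (k + 1) (fun i => (F i : MvPolynomial (Fin (k + 1 + 1)) K)) 1} →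
      IsIrreducible C → ¬ C ⊆ LS K (Fin (k + 2)) (Fin (k + 1)) dd →
      dimSet C < dimSet (M := tupleSpace K (k + 1) (k + 1) (fun _ => dd))
        (LS K (Fin (k + 2)) (Fin (k + 1)) dd) := fun C hCZ hC hCL =>
    dim_lt hdd hk rfl hC (fun F hF => hCZ hF) hCL
  refine ⟨⟨⟨hLZ, hLirr⟩, fun t ht hLt => ?_⟩, fun C hC hne => ?_⟩
  · by_contra hc
    exact absurd (hlt t ht.1 ht.2 hc) (not_lt.2 (zar_dim_mono hLt))
  · refine hlt C hC.1.1 hC.1.2 fun hCL => hne ?_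
    exact Set.Subset.antisymm hCL (hC.2 ⟨hLZ, hLirr⟩ hCL)

end Statement2
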